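/- arXiv:2103.03742 — 10 statements merged into one kernel-verified Lean document; each statement's English description precedes it below -/
import Mathlib

section
/- Let S be a symmetric positive semidefinite real N×N matrix and let P be any real M×N matrix. Suppose T is a real N×N matrix such that for every η ∈ ℝ^N one has P (T η) = 0 and there exists λ ∈ ℝ^M with S (T η) + Pᵀ λ = η. Then T is symmetric and positive semidefinite, and moreover ηᵀ T η = (T η)ᵀ S (T η) for every η ∈ ℝ^N. -/
open Matrix

/- The multiplier disappears when the first equation of the system is multiplied by `Tᴴ`, because
`Tᴴ * Pᴴ = (P * T)ᴴ = 0`. What remains is `Tᴴ * S * T = Tᴴ`. Its left-hand side is Hermitian with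
`S`, so `T = Tᴴ * S * T`, and `T` inherits positivity from `S` by congruence. -/

theorem posSemidef_iff_of_trivialStar {n R : Type*} [Fintype n] [Ring R] [PartialOrder R]
    [StarRing R] [TrivialStar R] {A : Matrix n n R} :
    A.PosSemidef ↔ A = Aᵀ ∧ ∀ x : n → R, 0 ≤ x ⬝ᵥ A *ᵥ x := by
  rw [posSemidef_iff_dotProduct_mulVec, IsHermitian, conjTranspose_eq_transpose_of_trivial,
    eq_comm]
  simp only [star_trivial]

/-- `T` solves the saddle-point system with blocks `S` and `P`: for every right-hand side `η`, the
vector `T *ᵥ η` lies in the kernel of `P` and, together with some multiplier `μ`, satisfies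
`S *ᵥ (T *ᵥ η) + Pᴴ *ᵥ μ = η`. The multiplier need not be unique, so it is not part of the data.
Over a star ring, `Pᴴ` takes the place of the real `Pᵀ`. -/
structure IsSaddlePointSolutionOperator {m n R : Type*} [Fintype m] [Fintype n]
    [NonUnitalNonAssocSemiring R] [Star R]
    (S : Matrix n n R) (P : Matrix m n R) (T : Matrix n n R) : Prop where
  mulVec_mulVec_eq_zero : ∀ η : n → R, P *ᵥ (T *ᵥ η) = 0
  exists_multiplier : ∀ η : n → R, ∃ μ : m → R, S *ᵥ (T *ᵥ η) + Pᴴ *ᵥ μ = η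

namespace IsSaddlePointSolutionOperator

variable {m n R : Type*} [Fintype m] [Fintype n]

theorem mul_eq_zero [Semiring R] [Star R] {S : Matrix n n R} {P : Matrix m n R}
    {T : Matrix n n R} (hT : IsSaddlePointSolutionOperator S P T) : P * T = 0 :=
  ext_iff_mulVec.mpr fun η ↦ by
    rw [← mulVec_mulVec, hT.mulVec_mulVec_eq_zero, zero_mulVec]

section StarRing

variable [Semiring R] [StarRing R] {S : Matrix n n R} {P : Matrix m n R} {T : Matrix n n R}

theorem conjTranspose_mul_mul_self (hT : IsSaddlePointSolutionOperator S P T) :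
    Tᴴ * S * T = Tᴴ := by
  have conjTranspose_mul_eq_zero : Tᴴ * Pᴴ = 0 := by
    rw [← conjTranspose_mul, hT.mul_eq_zero, conjTranspose_zero]
  refine ext_iff_mulVec.mpr fun η ↦ ?_
  obtain ⟨μ, hμ⟩ := hT.exists_multiplier η
  calc
    (Tᴴ * S * T) *ᵥ η = Tᴴ *ᵥ (S *ᵥ (T *ᵥ η)) + (Tᴴ * Pᴴ) *ᵥ μ := by
      simp only [conjTranspose_mul_eq_zero, zero_mulVec, add_zero, mulVec_mulVec, Matrix.mul_assoc]
    _ = Tᴴ *ᵥ (S *ᵥ (T *ᵥ η) + Pᴴ *ᵥ μ) := by rw [mulVec_add, mulVec_mulVec μ]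
    _ = Tᴴ *ᵥ η := by rw [hμ]

theorem isHermitian (hT : IsSaddlePointSolutionOperator S P T) (hS : S.IsHermitian) :
    T.IsHermitian := by
  rw [← isHermitian_conjTranspose_iff, ← hT.conjTranspose_mul_mul_self]
  exact isHermitian_conjTranspose_mul_mul T hS

theorem eq_conjTranspose_mul_mul (hT : IsSaddlePointSolutionOperator S P T)
    (hS : S.IsHermitian) : T = Tᴴ * S * T :=
  (hT.conjTranspose_mul_mul_self.trans (hT.isHermitian hS).eq).symm

theorem star_dotProduct_mulVec (hT : IsSaddlePointSolutionOperator S P T) (hS : S.IsHermitian)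
    (η : n → R) : star η ⬝ᵥ T *ᵥ η = star (T *ᵥ η) ⬝ᵥ S *ᵥ (T *ᵥ η) :=
  calc
    star η ⬝ᵥ T *ᵥ η = star η ⬝ᵥ (Tᴴ * S * T) *ᵥ η := by rw [← hT.eq_conjTranspose_mul_mul hS]
    _ = star (T *ᵥ η) ⬝ᵥ S *ᵥ (T *ᵥ η) := by
      rw [star_mulVec, ← dotProduct_mulVec, mulVec_mulVec, mulVec_mulVec, Matrix.mul_assoc]

end StarRing

theorem posSemidef [Ring R] [PartialOrder R] [StarRing R] {S : Matrix n n R} {P : Matrix m n R}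
    {T : Matrix n n R} (hT : IsSaddlePointSolutionOperator S P T) (hS : S.PosSemidef) :
    T.PosSemidef := by
  rw [hT.eq_conjTranspose_mul_mul hS.isHermitian]
  exact hS.conjTranspose_mul_mul_same T

end IsSaddlePointSolutionOperator

theorem saddle_point_solution_operator_symm_psd_general {m n R : Type*} [Fintype m] [Fintype n]
    [Ring R] [PartialOrder R] [StarRing R] {S : Matrix n n R} {P : Matrix m n R}
    {T : Matrix n n R} (hS : S.PosSemidef) (hT : IsSaddlePointSolutionOperator S P T) :
    T.PosSemidef ∧ ∀ η : n → R, star η ⬝ᵥ T *ᵥ η = star (T *ᵥ η) ⬝ᵥ S *ᵥ (T *ᵥ η) :=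
  ⟨hT.posSemidef hS, hT.star_dotProduct_mulVec hS.isHermitian⟩

/-- Any solution operator `T` of the saddle-point system
(`P (T η) = 0` and `S (T η) + Pᵀ λ = η` for some `λ`) is symmetric and
positive semidefinite, and `ηᵀ T η = (T η)ᵀ S (T η)` for every `η`. -/
theorem saddle_point_solution_operator_symm_psd
    (N M : ℕ) (S : Matrix (Fin N) (Fin N) ℝ) (P : Matrix (Fin M) (Fin N) ℝ)
    (T : Matrix (Fin N) (Fin N) ℝ)
    (hSsymm : S = Sᵀ)
    (hSpsd : ∀ x : Fin N → ℝ, 0 ≤ x ⬝ᵥ S.mulVec x)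
    (hTker : ∀ η : Fin N → ℝ, P.mulVec (T.mulVec η) = 0)
    (hTsolve : ∀ η : Fin N → ℝ, ∃ lam : Fin M → ℝ,
      S.mulVec (T.mulVec η) + Pᵀ.mulVec lam = η) :
    T = Tᵀ ∧ (∀ η : Fin N → ℝ, 0 ≤ η ⬝ᵥ T.mulVec η) ∧
      (∀ η : Fin N → ℝ, η ⬝ᵥ T.mulVec η = (T.mulVec η) ⬝ᵥ S.mulVec (T.mulVec η)) := by
  simpa only [posSemidef_iff_of_trivialStar, star_trivial, and_assoc] using
    saddle_point_solution_operator_symm_psd_general (posSemidef_iff_of_trivialStar.mpr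
      ⟨hSsymm, hSpsd⟩) ⟨hTker, by simpa only [conjTranspose_eq_transpose_of_trivial] using hTsolve⟩
end

section
/- Let S be a symmetric positive semidefinite real N×N matrix, let P be a real M×N matrix with linearly independent rows, and assume xᵀ S x > 0 for every x ≠ 0 with P x = 0. Let P* be a real M×N matrix with P (P*)ᵀ = I_M and S (P*)ᵀ = 0. If T is a real N×N matrix such that for every η ∈ ℝ^N one has P (T η) = 0 and η − S (T η) ∈ range(Pᵀ), then T S = I_N − (P*)ᵀ P. -/
open Matrix

/-!
For every `x`, both `T S x` and `x - (P*)ᵀ P x` solve the saddle-point system with right-hand side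
`S x`, the latter with multiplier `0`. Solutions are unique: if `d` solves the system with
right-hand side `0`, then `S d` lies in the range of `Pᵀ`, which is orthogonal to `ker P ∋ d`, so
`dᵀ S d = 0` and hence `d = 0`.
-/

variable {R m n : Type*} [CommRing R] [Fintype m] [Fintype n]
  {S : Matrix n n R} {P : Matrix m n R} {x y η θ : n → R}

/-- `x` is the primal component of a solution of the saddle-point system
`S x + Pᵀ lam = η`, `P x = 0`; the multiplier `lam` is not recorded, as it need not be unique. -/
def IsSaddlePointSolution (S : Matrix n n R) (P : Matrix m n R) (η x : n → R) : Prop :=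
  P *ᵥ x = 0 ∧ ∃ lam : m → R, S *ᵥ x + Pᵀ *ᵥ lam = η

namespace IsSaddlePointSolution

theorem sub (hx : IsSaddlePointSolution S P η x) (hy : IsSaddlePointSolution S P θ y) :
    IsSaddlePointSolution S P (η - θ) (x - y) := by
  obtain ⟨hPx, lam, rfl⟩ := hx
  obtain ⟨hPy, mu, rfl⟩ := hy
  refine ⟨by rw [mulVec_sub, hPx, hPy, sub_zero], lam - mu, ?_⟩
  rw [mulVec_sub, mulVec_sub, add_sub_add_comm]

theorem dotProduct_mulVec_self (hx : IsSaddlePointSolution S P η x) :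
    x ⬝ᵥ S *ᵥ x = x ⬝ᵥ η := by
  obtain ⟨hPx, lam, rfl⟩ := hx
  have orthogonal : x ⬝ᵥ Pᵀ *ᵥ lam = 0 := by
    rw [dotProduct_mulVec, vecMul_transpose, hPx, zero_dotProduct]
  rw [dotProduct_add, orthogonal, add_zero]

theorem unique (hS : ∀ z : n → R, P *ᵥ z = 0 → z ⬝ᵥ S *ᵥ z = 0 → z = 0)
    (hx : IsSaddlePointSolution S P η x) (hy : IsSaddlePointSolution S P η y) : x = y := by
  have hsub := hx.sub hy
  refine sub_eq_zero.mp (hS (x - y) hsub.1 ?_)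
  rw [hsub.dotProduct_mulVec_self, sub_self, dotProduct_zero]

end IsSaddlePointSolution

theorem isSaddlePointSolution_one_sub_mul_mulVec [DecidableEq m] [DecidableEq n]
    {A : Matrix n m R} (hPA : P * A = 1) (hSA : S * A = 0) (x : n → R) :
    IsSaddlePointSolution S P (S *ᵥ x) ((1 - A * P) *ᵥ x) := by
  have hP : P * (1 - A * P) = 0 := by
    rw [Matrix.mul_sub, Matrix.mul_one, ← Matrix.mul_assoc, hPA, Matrix.one_mul, sub_self]
  have hS : S * (1 - A * P) = S := by
    rw [Matrix.mul_sub, Matrix.mul_one, ← Matrix.mul_assoc, hSA, Matrix.zero_mul, sub_zero]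
  refine ⟨by rw [mulVec_mulVec, hP, zero_mulVec], 0, ?_⟩
  rw [mulVec_mulVec, hS, mulVec_zero, add_zero]

theorem saddle_point_TS_eq_id_sub_proj_general [DecidableEq m] [DecidableEq n]
    {Pstar : Matrix m n R} {T : Matrix n n R}
    (hS : ∀ x : n → R, P *ᵥ x = 0 → x ⬝ᵥ S *ᵥ x = 0 → x = 0)
    (hPPstar : P * Pstarᵀ = 1) (hSPstar : S * Pstarᵀ = 0)
    (hT : ∀ η : n → R, IsSaddlePointSolution S P η (T *ᵥ η)) :
    T * S = 1 - Pstarᵀ * P := by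
  refine mulVec_injective (funext fun x ↦ ?_)
  rw [← mulVec_mulVec]
  exact (hT (S *ᵥ x)).unique hS (isSaddlePointSolution_one_sub_mul_mulVec hPPstar hSPstar x)

/-- If `P*` satisfies `P (P*)ᵀ = I_M` and `S (P*)ᵀ = 0`, and `T`
is a solution operator of the saddle-point system associated with `S` and `P`,
then `T S = I_N − (P*)ᵀ P`. -/
theorem saddle_point_TS_eq_id_sub_proj
    (N M : ℕ) (S : Matrix (Fin N) (Fin N) ℝ)
    (P Pstar : Matrix (Fin M) (Fin N) ℝ)
    (T : Matrix (Fin N) (Fin N) ℝ)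
    (hSsymm : S = Sᵀ)
    (hSpsd : ∀ x : Fin N → ℝ, 0 ≤ x ⬝ᵥ S.mulVec x)
    (hPsurj : Function.Surjective P.mulVec)
    (hSpos : ∀ x : Fin N → ℝ, P.mulVec x = 0 → x ≠ 0 → 0 < x ⬝ᵥ S.mulVec x)
    (hPPstar : P * Pstarᵀ = 1)
    (hSPstar : S * Pstarᵀ = 0)
    (hTker : ∀ η : Fin N → ℝ, P.mulVec (T.mulVec η) = 0)
    (hTsolve : ∀ η : Fin N → ℝ, ∃ lam : Fin M → ℝ,
      S.mulVec (T.mulVec η) + Pᵀ.mulVec lam = η) :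
    T * S = 1 - Pstarᵀ * P := by
  exact saddle_point_TS_eq_id_sub_proj_general
    (fun x hPx hxSx ↦ by_contra fun hx ↦ (hSpos x hPx hx).ne' hxSx)
    hPPstar hSPstar fun η ↦ ⟨hTker η, hTsolve η⟩
end

section
/- Let S be a symmetric positive semidefinite real N×N matrix, let P be a real M×N matrix with linearly independent rows, and assume xᵀ S x > 0 for every x ≠ 0 with P x = 0. Let P* be a real M×N matrix with P (P*)ᵀ = I_M and S (P*)ᵀ = 0. If T is a real N×N matrix such that for every η ∈ ℝ^N one has P (T η) = 0 and η − S (T η) ∈ range(Pᵀ), then S T S = S and T S T = T; that is, T is a reflexive generalized inverse of S. -/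
open Matrix

/-!
Since `P*` annihilates `S` and is a left inverse of `Pᵀ`, applying it to the saddle-point equation
identifies the multiplier as `λ = P* η`. Hence `S T + Pᵀ P* = 1`, and multiplying by `S` on the
right gives `S T S = S`. The columns of `T S T` and `T` lie in `ker P` and have the same image
under `S`, which is injective on `ker P` by positivity; so `T S T = T`.
-/

section SaddlePoint

variable {R k l m n : Type*} [Fintype n]

lemma mul_add_mul_eq_one_of_forall_exists_mulVec [Semiring R]
    [Fintype l] [DecidableEq l] [Fintype m] [DecidableEq m]
    {S : Matrix l n R} {Q : Matrix l m R} {L : Matrix m l R} {T : Matrix n l R}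
    (hLS : L * S = 0) (hLQ : L * Q = 1)
    (hTsolve : ∀ η : l → R, ∃ lam : m → R, S *ᵥ (T *ᵥ η) + Q *ᵥ lam = η) :
    S * T + Q * L = 1 := by
  refine ext_of_mulVec_single fun i => ?_
  set η : l → R := Pi.single i 1
  obtain ⟨lam, hlam⟩ := hTsolve η
  have hlam_eq : lam = L *ᵥ η := calc
    lam = (L * S) *ᵥ (T *ᵥ η) + (L * Q) *ᵥ lam := by
      rw [hLS, hLQ, zero_mulVec, one_mulVec, zero_add]
    _ = L *ᵥ (S *ᵥ (T *ᵥ η) + Q *ᵥ lam) := by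
      rw [mulVec_add, mulVec_mulVec _ L S, mulVec_mulVec _ L Q]
    _ = L *ᵥ η := by rw [hlam]
  rw [add_mulVec, ← mulVec_mulVec, ← mulVec_mulVec, ← hlam_eq, hlam, one_mulVec]

lemma mul_mul_self_of_mul_add_mul_eq_one [Semiring R]
    [Fintype l] [DecidableEq l] [Fintype m]
    {S : Matrix l n R} {Q : Matrix l m R} {L : Matrix m l R} {T : Matrix n l R}
    (hLS : L * S = 0) (hST : S * T + Q * L = 1) :
    S * T * S = S := calc
  S * T * S = (S * T + Q * L) * S := by
    rw [Matrix.add_mul, Matrix.mul_assoc Q, hLS, Matrix.mul_zero, add_zero]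
  _ = S := by rw [hST, Matrix.one_mul]

lemma eq_of_mul_eq_mul_of_mulVec_eq_zero [Ring R] {S : Matrix l n R} {P : Matrix k n R}
    {A B : Matrix n m R} (hker : ∀ x : n → R, P *ᵥ x = 0 → S *ᵥ x = 0 → x = 0)
    (hP : P * A = P * B) (hS : S * A = S * B) : A = B := by
  refine ext_col fun j => sub_eq_zero.mp (hker _ ?_ ?_)
  · rw [mulVec_sub, sub_eq_zero]
    exact congrArg (·.col j) hP
  · rw [mulVec_sub, sub_eq_zero]
    exact congrArg (·.col j) hS

/-- `Q` and `L` play the roles of `Pᵀ` and `P*`. -/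
theorem saddle_point_reflexive_generalized_inverse_general [Ring R]
    [Fintype l] [Fintype m] [DecidableEq m]
    {S : Matrix l n R} {P : Matrix k n R} {Q : Matrix l m R} {L : Matrix m l R} {T : Matrix n l R}
    (hLS : L * S = 0) (hLQ : L * Q = 1)
    (hker : ∀ x : n → R, P *ᵥ x = 0 → S *ᵥ x = 0 → x = 0)
    (hTker : ∀ η : l → R, P *ᵥ (T *ᵥ η) = 0)
    (hTsolve : ∀ η : l → R, ∃ lam : m → R, S *ᵥ (T *ᵥ η) + Q *ᵥ lam = η) :
    S * T * S = S ∧ T * S * T = T := by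
  classical
  have hPT : P * T = 0 := ext_of_mulVec_single fun i => by
    rw [← mulVec_mulVec, hTker, zero_mulVec]
  have hSTS : S * T * S = S := mul_mul_self_of_mul_add_mul_eq_one hLS
    (mul_add_mul_eq_one_of_forall_exists_mulVec hLS hLQ hTsolve)
  refine ⟨hSTS, eq_of_mul_eq_mul_of_mulVec_eq_zero hker ?_ ?_⟩
  · rw [← Matrix.mul_assoc, ← Matrix.mul_assoc, hPT, Matrix.zero_mul, Matrix.zero_mul]
  · rw [← Matrix.mul_assoc, ← Matrix.mul_assoc, hSTS]

end SaddlePoint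

/-- Under the same assumptions as Statement 2, the solution
operator `T` is a reflexive generalized inverse of `S`: `S T S = S` and
`T S T = T`. -/
theorem saddle_point_reflexive_generalized_inverse
    (N M : ℕ) (S : Matrix (Fin N) (Fin N) ℝ)
    (P Pstar : Matrix (Fin M) (Fin N) ℝ)
    (T : Matrix (Fin N) (Fin N) ℝ)
    (hSsymm : S = Sᵀ)
    (hSpsd : ∀ x : Fin N → ℝ, 0 ≤ x ⬝ᵥ S.mulVec x)
    (hPsurj : Function.Surjective P.mulVec)
    (hSpos : ∀ x : Fin N → ℝ, P.mulVec x = 0 → x ≠ 0 → 0 < x ⬝ᵥ S.mulVec x)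
    (hPPstar : P * Pstarᵀ = 1)
    (hSPstar : S * Pstarᵀ = 0)
    (hTker : ∀ η : Fin N → ℝ, P.mulVec (T.mulVec η) = 0)
    (hTsolve : ∀ η : Fin N → ℝ, ∃ lam : Fin M → ℝ,
      S.mulVec (T.mulVec η) + Pᵀ.mulVec lam = η) :
    S * T * S = S ∧ T * S * T = T :=
  saddle_point_reflexive_generalized_inverse_general (P := P) (L := Pstar)
    (by simpa [← hSsymm] using congrArg transpose hSPstar)
    (by simpa using congrArg transpose hPPstar)
    (fun x hPx hSx => by_contra fun hx => by simpa [hSx] using hSpos x hPx hx) hTker hTsolve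
end

section
/- Under the stated assumptions, for every η in W* with coordinate vector η⃗ (so that η = Σ_n η⃗_n φ_n), one has C_poi⁻² · β² · A⁻¹ · p*(η)² ≤ η⃗ᵀ S† η⃗. (Lower bound of Proposition 2.7: the bilinear form s*(η, ζ) := ζ⃗ᵀ S† η⃗ is coercive with respect to the dual seminorm p*.) -/
open Matrix

/-!
Set `ζ = η - η ∘ Π̂`. On `ker Π̂` it agrees with `η`, so the Poincaré inequality gives
`p*(η) ≤ C_poi ‖ζ‖`, and the inf-sup condition bounds `β ‖ζ‖` by testing `ζ` on `W`. Testing `ζ`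
on `w` amounts to testing `η` on `w - Π̂ w ∈ W ∩ ker Π̂`. There the saddle-point system identifies
`η` with `d ↦ dᵀ S x`, where `x = S† η⃗`, since the multiplier term lies in `range Pᵀ` and pairs to
zero with `ker P`. Cauchy–Schwarz for `S` and the upper bound on `S` give
`η ≤ √(A xᵀ S x) p`, and `xᵀ S x = η⃗ᵀ S† η⃗` because `P x = 0`.
-/

section DualSeminorm

variable {V : Type*} [SeminormedAddCommGroup V] [NormedSpace ℝ V]

/-- The dual seminorm `sup {η v / p v : v ∈ K, v ≠ 0}` of a functional `η`, relative to a seminorm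
`p` and a subspace `K` of test vectors. For `K = ker Π̂` this is `p*`; for `p` the norm and
`K = W` it is the supremum in the inf-sup condition. It is `0` if `K` is trivial or
the quotients are unbounded, and test vectors with `p v = 0` contribute the quotient `0`. -/
noncomputable def dualSeminorm (p : Seminorm ℝ V) (K : Submodule ℝ V) (η : V →L[ℝ] ℝ) : ℝ :=
  sSup ((fun v => η v / p v) '' {v : V | v ∈ K ∧ v ≠ 0})

theorem dualSeminorm_nonneg (p : Seminorm ℝ V) (K : Submodule ℝ V) (η : V →L[ℝ] ℝ) :
    0 ≤ dualSeminorm p K η := by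
  rcases Set.eq_empty_or_nonempty {v : V | v ∈ K ∧ v ≠ 0} with hK | ⟨v, hv, hv0⟩
  · simp [dualSeminorm, hK]
  · apply Real.sSup_nonneg'
    rcases le_total 0 (η v) with hη | hη
    · exact ⟨_, ⟨v, ⟨hv, hv0⟩, rfl⟩, div_nonneg hη (apply_nonneg p v)⟩
    · exact ⟨_, ⟨-v, ⟨K.neg_mem hv, neg_ne_zero.2 hv0⟩, rfl⟩,
        div_nonneg (by simpa using hη) (apply_nonneg p _)⟩

variable {p : Seminorm ℝ V} {K : Submodule ℝ V} {C : ℝ}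

theorem dualSeminorm_le {η : V →L[ℝ] ℝ} (hC : 0 ≤ C) (hη : ∀ v ∈ K, η v ≤ C * p v) :
    dualSeminorm p K η ≤ C := by
  refine Real.sSup_le ?_ hC
  rintro _ ⟨v, ⟨hv, -⟩, rfl⟩
  exact div_le_of_le_mul₀ (apply_nonneg p v) hC (hη v hv)

theorem dualSeminorm_ker_le_mul_norm_sub_comp {T : V →L[ℝ] V} (hC : 0 ≤ C)
    (hpoincare : ∀ v, T v = 0 → ‖v‖ ≤ C * p v) (η : V →L[ℝ] ℝ) :
    dualSeminorm p T.ker η ≤ C * ‖η - η.comp T‖ := by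
  refine dualSeminorm_le (by positivity) fun v hv => ?_
  have hTv : T v = 0 := hv
  calc η v = (η - η.comp T) v := by simp [hTv]
    _ ≤ ‖η - η.comp T‖ * ‖v‖ := (Real.le_norm_self _).trans ((η - η.comp T).le_opNorm v)
    _ ≤ ‖η - η.comp T‖ * (C * p v) := by gcongr; exact hpoincare v hTv
    _ = C * ‖η - η.comp T‖ * p v := by ring

theorem dualSeminorm_sub_comp_le {q : Seminorm ℝ V} {T : V →L[ℝ] V} {W : Submodule ℝ V}
    {η : V →L[ℝ] ℝ} (hpq : p ≤ q) (hidem : ∀ v, T (T v) = T v) (hpT : ∀ v, p (T v) = 0)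
    (hTW : ∀ w ∈ W, T w ∈ W) (hC : 0 ≤ C) (hη : ∀ w ∈ W, T w = 0 → η w ≤ C * p w) :
    dualSeminorm q W (η - η.comp T) ≤ C := by
  refine dualSeminorm_le hC fun w hw => ?_
  have hp_sub : p (w - T w) ≤ q w :=
    calc p (w - T w) ≤ p w + p (T w) := map_sub_le_add p w (T w)
      _ = p w := by rw [hpT, add_zero]
      _ ≤ q w := hpq w
  calc (η - η.comp T) w = η (w - T w) := by simp
    _ ≤ C * p (w - T w) := hη _ (W.sub_mem hw (hTW w hw)) (by rw [map_sub, hidem, sub_self])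
    _ ≤ C * q w := by gcongr

theorem mul_dualSeminorm_ker_le_of_infSup {T : V →L[ℝ] V} {W : Submodule ℝ V} {η : V →L[ℝ] ℝ}
    {β M : ℝ} (hple : ∀ v, p v ≤ ‖v‖) (hidem : ∀ v, T (T v) = T v) (hpT : ∀ v, p (T v) = 0)
    (hC : 0 ≤ C) (hpoincare : ∀ v, T v = 0 → ‖v‖ ≤ C * p v) (hTW : ∀ w ∈ W, T w ∈ W)
    (hβ : 0 ≤ β)
    (hinfsup : β * ‖η - η.comp T‖ ≤ dualSeminorm (normSeminorm ℝ V) W (η - η.comp T))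
    (hM : 0 ≤ M) (hη : ∀ w ∈ W, T w = 0 → η w ≤ M * p w) :
    β * dualSeminorm p T.ker η ≤ C * M :=
  calc β * dualSeminorm p T.ker η ≤ β * (C * ‖η - η.comp T‖) := by
        gcongr; exact dualSeminorm_ker_le_mul_norm_sub_comp hC hpoincare η
    _ = C * (β * ‖η - η.comp T‖) := by ring
    _ ≤ C * dualSeminorm (normSeminorm ℝ V) W (η - η.comp T) := by gcongr
    _ ≤ C * M := by gcongr; exact dualSeminorm_sub_comp_le hple hidem hpT hTW hM hη

end DualSeminorm

section Coordinates

variable {R V F ι κ : Type*} [CommRing R] [AddCommGroup V] [Module R V] [FunLike F V R]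
  [LinearMapClass F R V R] [Fintype ι] {e : ι → V}

theorem mulVec_eq_apply_sum_smul {f : κ → F} {P : Matrix κ ι R}
    (hP : ∀ i j, P i j = f i (e j)) (d : ι → R) :
    P *ᵥ d = fun i => f i (∑ j, d j • e j) := by
  ext i
  simp [mulVec, dotProduct, hP, mul_comm]

theorem mulVec_eq_zero_of_sum_apply_smul_eq_zero [Fintype κ] {U : Type*} [AddCommGroup U]
    [Module R U] {u : κ → U} (hu : LinearIndependent R u) {f : κ → F} {P : Matrix κ ι R}
    (hP : ∀ i j, P i j = f i (e j)) {d : ι → R}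
    (hd : ∑ i, f i (∑ j, d j • e j) • u i = 0) : P *ᵥ d = 0 := by
  rw [mulVec_eq_apply_sum_smul hP]
  exact funext (Fintype.linearIndependent_iff.1 hu _ hd)

theorem apply_sum_smul_of_biorthogonal [DecidableEq ι] {φ : ι → F}
    (hbiorth : ∀ n m, φ n (e m) = if n = m then 1 else 0) (d : ι → R) (n : ι) :
    φ n (∑ m, d m • e m) = d n := by
  simp [hbiorth]

end Coordinates

theorem dotProduct_eq_of_sub_mulVec_eq_transpose_mulVec {R ι κ : Type*} [CommRing R] [Fintype ι]
    [Fintype κ] {S : Matrix ι ι R} {P : Matrix κ ι R} {c x d : ι → R} {lam : κ → R}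
    (hsolve : c - S *ᵥ x = Pᵀ *ᵥ lam) (hd : P *ᵥ d = 0) : d ⬝ᵥ c = d ⬝ᵥ S *ᵥ x := by
  rw [← sub_eq_zero, ← dotProduct_sub, hsolve, dotProduct_transpose_mulVec, hd, dotProduct_zero]

section PosSemidef

variable {ι : Type*} [Fintype ι] {S : Matrix ι ι ℝ}

theorem sq_dotProduct_mulVec_le (hS : S.PosSemidef) (d x : ι → ℝ) :
    (d ⬝ᵥ S *ᵥ x) ^ 2 ≤ (d ⬝ᵥ S *ᵥ d) * (x ⬝ᵥ S *ᵥ x) := by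
  classical
  have hnonneg (y : ι → ℝ) : 0 ≤ S.toBilin' y y :=
    (hS.dotProduct_mulVec_nonneg y).trans_eq (toBilin'_apply' S y y).symm
  have hsymm : S.toBilin'.IsSymm := isSymm_toBilin'_iff_isSymm.2 hS.isHermitian
  simpa only [toBilin'_apply'] using
    S.toBilin'.apply_sq_le_of_symm hnonneg (LinearMap.BilinForm.isSymm_iff.1 hsymm) d x

theorem dotProduct_mulVec_le_sqrt_mul (hS : S.PosSemidef) {A r : ℝ} (hr : 0 ≤ r) {d : ι → ℝ}
    (hd : d ⬝ᵥ S *ᵥ d ≤ A * r ^ 2) (x : ι → ℝ) :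
    d ⬝ᵥ S *ᵥ x ≤ √(A * (x ⬝ᵥ S *ᵥ x)) * r := by
  have hx : 0 ≤ x ⬝ᵥ S *ᵥ x := hS.dotProduct_mulVec_nonneg x
  have hsq : (d ⬝ᵥ S *ᵥ x) ^ 2 ≤ A * (x ⬝ᵥ S *ᵥ x) * r ^ 2 :=
    calc (d ⬝ᵥ S *ᵥ x) ^ 2 ≤ (d ⬝ᵥ S *ᵥ d) * (x ⬝ᵥ S *ᵥ x) := sq_dotProduct_mulVec_le hS d x
      _ ≤ A * r ^ 2 * (x ⬝ᵥ S *ᵥ x) := by gcongr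
      _ = A * (x ⬝ᵥ S *ᵥ x) * r ^ 2 := by ring
  calc d ⬝ᵥ S *ᵥ x ≤ √(A * (x ⬝ᵥ S *ᵥ x) * r ^ 2) := Real.le_sqrt_of_sq_le hsq
    _ = √(A * (x ⬝ᵥ S *ᵥ x)) * r := by rw [Real.sqrt_mul' _ (sq_nonneg r), Real.sqrt_sq hr]

end PosSemidef

theorem inv_sq_mul_sq_mul_inv_mul_sq_le {a b A q s : ℝ} (ha : 0 < a) (hA : 0 < A) (hb : 0 ≤ b)
    (hs : 0 ≤ s) (hq : 0 ≤ q) (h : b * s ≤ a * √(A * q)) :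
    a⁻¹ ^ 2 * b ^ 2 * A⁻¹ * s ^ 2 ≤ q :=
  calc a⁻¹ ^ 2 * b ^ 2 * A⁻¹ * s ^ 2 = a⁻¹ ^ 2 * A⁻¹ * (b * s) ^ 2 := by ring
    _ ≤ a⁻¹ ^ 2 * A⁻¹ * (a * √(A * q)) ^ 2 := by gcongr
    _ = q := by rw [mul_pow, Real.sq_sqrt (by positivity)]; field_simp

theorem dual_bilinear_form_coercive_general {V ι κ : Type*} [NormedAddCommGroup V]
    [NormedSpace ℝ V] [Fintype ι] [DecidableEq ι] [Fintype κ]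
    (p : Seminorm ℝ V) (hple : ∀ v, p v ≤ ‖v‖)
    (Pih : V →L[ℝ] V) (hidem : ∀ v, Pih (Pih v) = Pih v) (hpPih : ∀ v, p (Pih v) = 0)
    (Cpoi : ℝ) (hCpoi : 0 < Cpoi) (hpoincare : ∀ v, Pih v = 0 → ‖v‖ ≤ Cpoi * p v)
    (e : ι → V) (φ : ι → V →L[ℝ] ℝ) (hbiorth : ∀ n m, φ n (e m) = if n = m then 1 else 0)
    (hWhat : ∀ u, Pih u ∈ Submodule.span ℝ (Set.range e))
    (hWstarPih : ∀ η ∈ Submodule.span ℝ (Set.range φ),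
      η.comp Pih ∈ Submodule.span ℝ (Set.range φ))
    (β : ℝ) (hβ : 0 ≤ β)
    (hinfsup : ∀ η ∈ Submodule.span ℝ (Set.range φ),
      β * ‖η‖ ≤ dualSeminorm (normSeminorm ℝ V) (Submodule.span ℝ (Set.range e)) η)
    (ehat : κ → V) (ehatstar : κ → V →L[ℝ] ℝ) (hindep : LinearIndependent ℝ ehat)
    (hrepr : ∀ v, Pih v = ∑ i, ehatstar i v • ehat i)
    (P : Matrix κ ι ℝ) (hP : ∀ i m, P i m = ehatstar i (e m))
    (S : Matrix ι ι ℝ) (hS : S.PosSemidef) (A : ℝ) (hA : 0 < A)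
    (hS_le : ∀ d : ι → ℝ, d ⬝ᵥ S *ᵥ d ≤ A * p (∑ n, d n • e n) ^ 2)
    (Sdag : Matrix ι ι ℝ) (hSdag_ker : ∀ ξ, P *ᵥ (Sdag *ᵥ ξ) = 0)
    (hSdag_solve : ∀ ξ, ∃ lam : κ → ℝ, ξ - S *ᵥ (Sdag *ᵥ ξ) = Pᵀ *ᵥ lam) (c : ι → ℝ) :
    Cpoi⁻¹ ^ 2 * β ^ 2 * A⁻¹ * dualSeminorm p Pih.ker (∑ n, c n • φ n) ^ 2 ≤
      c ⬝ᵥ Sdag *ᵥ c := by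
  obtain ⟨lam, hlam⟩ := hSdag_solve c
  set x := Sdag *ᵥ c
  set η := ∑ n, c n • φ n with hη_def
  have hη : η ∈ Submodule.span ℝ (Set.range φ) :=
    (Submodule.mem_span_range_iff_exists_fun ℝ).2 ⟨c, rfl⟩
  have energy : c ⬝ᵥ x = x ⬝ᵥ S *ᵥ x := by
    rw [dotProduct_comm, dotProduct_eq_of_sub_mulVec_eq_transpose_mulVec hlam (hSdag_ker c)]
  have η_le : ∀ w ∈ Submodule.span ℝ (Set.range e), Pih w = 0 → η w ≤ √(A * (c ⬝ᵥ x)) * p w := by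
    intro w hw hPw
    obtain ⟨d, rfl⟩ := (Submodule.mem_span_range_iff_exists_fun ℝ).1 hw
    have hPd : P *ᵥ d = 0 :=
      mulVec_eq_zero_of_sum_apply_smul_eq_zero hindep hP ((hrepr _).symm.trans hPw)
    calc η (∑ n, d n • e n) = d ⬝ᵥ c := by
          simp [hη_def, -map_sum, apply_sum_smul_of_biorthogonal hbiorth, dotProduct, mul_comm]
      _ = d ⬝ᵥ S *ᵥ x := dotProduct_eq_of_sub_mulVec_eq_transpose_mulVec hlam hPd
      _ ≤ √(A * (c ⬝ᵥ x)) * p (∑ n, d n • e n) :=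
          energy ▸ dotProduct_mulVec_le_sqrt_mul hS (apply_nonneg p _) (hS_le d) x
  have hβp : β * dualSeminorm p Pih.ker η ≤ Cpoi * √(A * (c ⬝ᵥ x)) :=
    mul_dualSeminorm_ker_le_of_infSup hple hidem hpPih hCpoi.le hpoincare (fun w _ => hWhat w) hβ
      (hinfsup _ (sub_mem hη (hWstarPih η hη))) (Real.sqrt_nonneg _) η_le
  exact inv_sq_mul_sq_mul_inv_mul_sq_le hCpoi hA hβ (dualSeminorm_nonneg _ _ _)
    (energy ▸ hS.dotProduct_mulVec_nonneg x) hβp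

/-- lower bound of Proposition 2.7. With `S†` the reflexive
generalized inverse of the stiffness matrix `S` obtained from the saddle-point
system with constraint matrix `P`, the bilinear form `s*(η,ζ) := ζ⃗ᵀ S† η⃗` on
`W*` is coercive with respect to the dual seminorm `p*`:
`C_poi⁻² · β² · A⁻¹ · p*(η)² ≤ η⃗ᵀ S† η⃗`. -/
theorem dual_bilinear_form_coercive
    {V : Type*} [NormedAddCommGroup V] [InnerProductSpace ℝ V] [CompleteSpace V]
    (p : Seminorm ℝ V) (hple : ∀ v : V, p v ≤ ‖v‖)
    (Pih : V →L[ℝ] V) (hidem : ∀ v : V, Pih (Pih v) = Pih v)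
    (hrange : ∀ v : V, p v = 0 ↔ ∃ u : V, Pih u = v)
    (Cpoi : ℝ) (hCpoi : 0 < Cpoi)
    (hpoincare : ∀ v : V, Pih v = 0 → ‖v‖ ≤ Cpoi * p v)
    (pstar : (V →L[ℝ] ℝ) → ℝ)
    (hpstar : ∀ η : V →L[ℝ] ℝ,
      pstar η = sSup ((fun v => η v / p v) '' {v : V | Pih v = 0 ∧ v ≠ 0}))
    (N M : ℕ) (e : Fin N → V) (φ : Fin N → (V →L[ℝ] ℝ))
    (hbiorth : ∀ n m, φ n (e m) = if n = m then 1 else 0)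
    -- `Ŵ ⊆ W`: the range of `Π̂` is contained in `W = span (e₁, …, e_N)`
    (hWhat : ∀ u : V, Pih u ∈ Submodule.span ℝ (Set.range e))
    -- `η ∘ Π̂ ∈ W*` for every `η ∈ W* = span (φ₁, …, φ_N)`
    (hWstarPih : ∀ η : V →L[ℝ] ℝ, η ∈ Submodule.span ℝ (Set.range φ) →
      η.comp Pih ∈ Submodule.span ℝ (Set.range φ))
    -- inf-sup condition between `W*` and `W`
    (β : ℝ) (hβ : 0 < β)
    (hinfsup : ∀ η : V →L[ℝ] ℝ, η ∈ Submodule.span ℝ (Set.range φ) →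
      β * ‖η‖ ≤ sSup ((fun w : V => η w / ‖w‖) ''
        {w : V | w ∈ Submodule.span ℝ (Set.range e) ∧ w ≠ 0}))
    -- `ê` is a basis of `Ŵ = range Π̂`, and `Π̂ v = Σᵢ ê*ᵢ(v) êᵢ`
    (ehat : Fin M → V) (ehatstar : Fin M → (V →L[ℝ] ℝ))
    (hehat_indep : LinearIndependent ℝ ehat)
    (hehat_span : ∀ v : V, (∃ u : V, Pih u = v) ↔
      v ∈ Submodule.span ℝ (Set.range ehat))
    (hPih_repr : ∀ v : V, Pih v = ∑ i, (ehatstar i v) • ehat i)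
    -- the matrix `P` with entries `P i m = ê*ᵢ(e_m)`
    (P : Matrix (Fin M) (Fin N) ℝ) (hP : ∀ i m, P i m = ehatstar i (e m))
    -- the stiffness matrix `S`: symmetric, positive semidefinite, and
    -- coercive/continuous with respect to `p` in the coordinates of `W`
    (S : Matrix (Fin N) (Fin N) ℝ)
    (hSsymm : S = Sᵀ)
    (hSpsd : ∀ x : Fin N → ℝ, 0 ≤ x ⬝ᵥ S.mulVec x)
    (α A : ℝ) (hα : 0 < α) (hA : 0 < A)
    (hS_coercive : ∀ c : Fin N → ℝ, α * (p (∑ n, c n • e n))^2 ≤ c ⬝ᵥ S.mulVec c)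
    (hS_cont : ∀ c d : Fin N → ℝ,
      d ⬝ᵥ S.mulVec c ≤ A * p (∑ n, c n • e n) * p (∑ n, d n • e n))
    -- `S†` solves the saddle-point system: `P (S† ξ) = 0` and
    -- `ξ − S (S† ξ) ∈ range Pᵀ`
    (Sdag : Matrix (Fin N) (Fin N) ℝ)
    (hSdag_ker : ∀ ξ : Fin N → ℝ, P.mulVec (Sdag.mulVec ξ) = 0)
    (hSdag_solve : ∀ ξ : Fin N → ℝ, ∃ lam : Fin M → ℝ,
      ξ - S.mulVec (Sdag.mulVec ξ) = Pᵀ.mulVec lam) :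
    ∀ c : Fin N → ℝ,
      Cpoi⁻¹^2 * β^2 * A⁻¹ * (pstar (∑ n, c n • φ n))^2 ≤ c ⬝ᵥ Sdag.mulVec c := by
  intro c
  have hS : S.PosSemidef := .of_dotProduct_mulVec_nonneg hSsymm.symm hSpsd
  have hS_le (d : Fin N → ℝ) : d ⬝ᵥ S *ᵥ d ≤ A * p (∑ n, d n • e n) ^ 2 :=
    (hS_cont d d).trans_eq (by ring)
  rw [hpstar]
  exact dual_bilinear_form_coercive_general p hple Pih hidem (fun v => (hrange _).2 ⟨v, rfl⟩)
    Cpoi hCpoi hpoincare e φ hbiorth hWhat hWstarPih β hβ.le hinfsup ehat ehatstar hehat_indep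
    hPih_repr P hP S hS A hA hS_le Sdag hSdag_ker hSdag_solve c
end

section
/- Under the stated assumptions, the seminorm p is recovered by duality against functionals annihilating the range of Π̂: for every v ∈ V, p(v) = sup { η(v) : η ∈ V', η ∘ Π̂ = 0, p*(η) ≤ 1 } (with the supremum over the empty set interpreted as 0). -/
/-!
By Hahn–Banach there is a functional `η` with `η v = p v` and `|η| ≤ p`; the domination makes `η`
continuous, gives `p*(η) ≤ 1`, and forces `η` to vanish where `p` does, in particular on the range
of `Π̂`. Conversely, the component of `v` in the range of `Π̂` is invisible both to `p` and to the
admissible functionals, so `η v ≤ p v` has to be checked only on the kernel of `Π̂`, where it is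
what `p*(η) ≤ 1` says. The Poincaré inequality makes the supremum defining `p*` finite there.
-/

lemma map_add_eq_right_of_map_eq_zero {F E : Type*} [AddGroup E] [FunLike F E ℝ]
    [AddGroupSeminormClass F E ℝ] (p : F) {u : E} (hu : p u = 0) (w : E) : p (u + w) = p w := by
  have h : |p (u + w) - p w| ≤ p (u + w - w) := abs_sub_map_le_sub p (u + w) w
  rw [add_sub_cancel_right, hu] at h
  exact sub_eq_zero.mp (abs_nonpos_iff.mp h)

theorem exists_strongDual_apply_eq_seminorm {𝕜 E : Type*} [RCLike 𝕜] [AddCommGroup E]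
    [TopologicalSpace E] [Module 𝕜 E] [PolynormableSpace 𝕜 E] {p : Seminorm 𝕜 E}
    (hp : Continuous p) (v : E) :
    ∃ η : StrongDual 𝕜 E, η v = (p v : 𝕜) ∧ ∀ x, ‖η x‖ ≤ p x := by
  rcases eq_or_ne v 0 with rfl | hv
  · exact ⟨0, by simp, by simp⟩
  · let f : Module.Dual 𝕜 (𝕜 ∙ v) := (p v : 𝕜) • (LinearEquiv.coord 𝕜 E v hv).toLinearMap
    have norm_f (x : 𝕜 ∙ v) : ‖f x‖ = p x := by
      let c := LinearEquiv.coord 𝕜 E v hv x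
      calc ‖(p v : 𝕜) * c‖ = ‖c‖ * p v := by
            rw [norm_mul, RCLike.norm_of_nonneg (apply_nonneg p v), mul_comm]
        _ = p (c • v) := (map_smul_eq_mul p c v).symm
        _ = p x := by rw [LinearEquiv.coord_apply_smul]
    obtain ⟨η, hηf, hηp⟩ :=
      f.exists_continuous_extension_of_le_seminorm _ hp fun x ↦ (norm_f x).le
    refine ⟨η, ?_, hηp⟩
    calc η v = f ⟨v, Submodule.mem_span_singleton_self v⟩ :=
        hηf ⟨v, Submodule.mem_span_singleton_self v⟩
      _ = p v := by
        simp only [f, LinearMap.smul_apply, LinearEquiv.coe_coe, LinearEquiv.coord_self,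
          smul_eq_mul, mul_one]

/-- The dual seminorm `p*` of a seminorm `p`, tested on the nonzero vectors of a subspace `W`.
The real supremum makes it `0` when `W = 0`, but also when the quotients `η w / p w` are unbounded;
it is therefore meant for `W` on which a Poincaré inequality `‖w‖ ≤ C * p w` holds. -/
noncomputable def dualSeminormOn {E : Type*} [AddCommGroup E] [TopologicalSpace E] [Module ℝ E]
    (p : Seminorm ℝ E) (W : Submodule ℝ E) (η : E →L[ℝ] ℝ) : ℝ :=
  sSup ((fun w ↦ η w / p w) '' {w | w ∈ W ∧ w ≠ 0})

lemma dualSeminormOn_le_one {E : Type*} [AddCommGroup E] [TopologicalSpace E] [Module ℝ E]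
    {p : Seminorm ℝ E} {W : Submodule ℝ E} {η : E →L[ℝ] ℝ} (h : ∀ w ∈ W, η w ≤ p w) :
    dualSeminormOn p W η ≤ 1 := by
  refine Real.sSup_le ?_ zero_le_one
  rintro _ ⟨w, ⟨hw, -⟩, rfl⟩
  exact div_le_one_of_le₀ (h w hw) (apply_nonneg p w)

section Poincare

variable {V : Type*} [NormedAddCommGroup V] [NormedSpace ℝ V] {p : Seminorm ℝ V}
  {W : Submodule ℝ V} {C : ℝ}

lemma seminorm_pos_of_poincare (hW : ∀ w ∈ W, ‖w‖ ≤ C * p w) {w : V} (hw : w ∈ W) (hw0 : w ≠ 0) :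
    0 < p w := by
  refine (apply_nonneg p w).lt_of_ne' fun hpw ↦ hw0 (norm_le_zero_iff.mp ?_)
  simpa [hpw] using hW w hw

lemma bddAbove_quotients_of_poincare (hW : ∀ w ∈ W, ‖w‖ ≤ C * p w) (η : V →L[ℝ] ℝ) :
    BddAbove ((fun w ↦ η w / p w) '' {w | w ∈ W ∧ w ≠ 0}) := by
  refine ⟨‖η‖ * C, ?_⟩
  rintro _ ⟨w, ⟨hw, hw0⟩, rfl⟩
  refine (div_le_iff₀ (seminorm_pos_of_poincare hW hw hw0)).mpr ?_
  calc η w ≤ ‖η w‖ := Real.le_norm_self _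
    _ ≤ ‖η‖ * ‖w‖ := η.le_opNorm w
    _ ≤ ‖η‖ * (C * p w) := by gcongr; exact hW w hw
    _ = ‖η‖ * C * p w := (mul_assoc _ _ _).symm

lemma apply_le_dualSeminormOn_mul (hW : ∀ w ∈ W, ‖w‖ ≤ C * p w) (η : V →L[ℝ] ℝ) {w : V}
    (hw : w ∈ W) : η w ≤ dualSeminormOn p W η * p w := by
  rcases eq_or_ne w 0 with rfl | hw0
  · simp
  · exact (div_le_iff₀ (seminorm_pos_of_poincare hW hw hw0)).mp
      (le_csSup (bddAbove_quotients_of_poincare hW η) ⟨w, ⟨hw, hw0⟩, rfl⟩)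

lemma apply_le_seminorm_of_dualSeminormOn_le_one (hW : ∀ w ∈ W, ‖w‖ ≤ C * p w)
    {N : Submodule ℝ V} (hNW : Codisjoint N W) (hN : ∀ u ∈ N, p u = 0) {η : V →L[ℝ] ℝ}
    (hηN : N ≤ η.ker) (hη : dualSeminormOn p W η ≤ 1) (v : V) : η v ≤ p v := by
  obtain ⟨u, w, hu, hw, rfl⟩ := Submodule.codisjoint_iff_exists_add_eq.mp hNW v
  have hηu : η u = 0 := hηN hu
  calc η (u + w) = η w := by rw [map_add, hηu, zero_add]
    _ ≤ dualSeminormOn p W η * p w := apply_le_dualSeminormOn_mul hW η hw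
    _ ≤ p w := mul_le_of_le_one_left (apply_nonneg p w) hη
    _ = p (u + w) := (map_add_eq_right_of_map_eq_zero p (hN u hu) w).symm

theorem seminorm_recovered_by_duality_general (hp : Continuous p) {N : Submodule ℝ V}
    (hNW : Codisjoint N W) (hN : ∀ u ∈ N, p u = 0) (hW : ∀ w ∈ W, ‖w‖ ≤ C * p w) (v : V) :
    IsGreatest ((fun η : V →L[ℝ] ℝ ↦ η v) '' {η | N ≤ η.ker ∧ dualSeminormOn p W η ≤ 1})
      (p v) := by
  constructor
  · obtain ⟨η, hηv, hηp⟩ := exists_strongDual_apply_eq_seminorm hp v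
    have hηN : N ≤ η.ker := fun u hu ↦ norm_le_zero_iff.mp ((hηp u).trans_eq (hN u hu))
    have hη : dualSeminormOn p W η ≤ 1 :=
      dualSeminormOn_le_one fun w _ ↦ (Real.le_norm_self _).trans (hηp w)
    exact ⟨η, ⟨hηN, hη⟩, hηv⟩
  · rintro _ ⟨η, ⟨hηN, hη⟩, rfl⟩
    exact apply_le_seminorm_of_dualSeminormOn_le_one hW hNW hN hηN hη v

end Poincare

/-- The seminorm `p` is recovered by duality against the
functionals annihilating the range of `Π̂`: for every `v ∈ V`,
`p v = sup { η v : η ∈ V', η ∘ Π̂ = 0, p*(η) ≤ 1 }`. -/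
theorem seminorm_recovered_by_duality
    {V : Type*} [NormedAddCommGroup V] [InnerProductSpace ℝ V] [CompleteSpace V]
    (p : Seminorm ℝ V) (hple : ∀ v : V, p v ≤ ‖v‖)
    (Pih : V →L[ℝ] V) (hidem : ∀ v : V, Pih (Pih v) = Pih v)
    (hrange : ∀ v : V, p v = 0 ↔ ∃ u : V, Pih u = v)
    (Cpoi : ℝ) (hCpoi : 0 < Cpoi)
    (hpoincare : ∀ v : V, Pih v = 0 → ‖v‖ ≤ Cpoi * p v)
    (pstar : (V →L[ℝ] ℝ) → ℝ)
    (hpstar : ∀ η : V →L[ℝ] ℝ,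
      pstar η = sSup ((fun v => η v / p v) '' {v : V | Pih v = 0 ∧ v ≠ 0})) :
    ∀ v : V, p v =
      sSup ((fun η : V →L[ℝ] ℝ => η v) ''
        {η : V →L[ℝ] ℝ | η.comp Pih = 0 ∧ pstar η ≤ 1}) := by
  intro v
  have hp : Continuous p := Seminorm.continuous_of_le (q := normSeminorm ℝ V) continuous_norm hple
  have hsplit : Codisjoint Pih.range Pih.ker :=
    (LinearMap.IsIdempotentElem.isCompl (LinearMap.ext hidem)).codisjoint
  have hpstar_eq : pstar = dualSeminormOn p Pih.ker := funext hpstar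
  have hker (η : V →L[ℝ] ℝ) : η.comp Pih = 0 ↔ Pih.range ≤ η.ker := by
    rw [LinearMap.range_le_ker_iff, ← ContinuousLinearMap.toLinearMap_comp,
      ← ContinuousLinearMap.toLinearMap_zero, ContinuousLinearMap.coe_inj]
  simp only [hker, hpstar_eq]
  exact (seminorm_recovered_by_duality_general hp hsplit (fun u hu ↦ (hrange u).mpr hu)
    hpoincare v).csSup_eq.symm
end

section
/- Suppose β > 0 is such that the two inf-sup conditions hold: β · ‖w‖ ≤ sup { η(w) : η ∈ W*, ‖η‖_{V'} ≤ 1 } for every w ∈ W, and β · ‖η‖_{V'} ≤ sup { η(w) : w ∈ W, ‖w‖ ≤ 1 } for every η ∈ W* (suprema over empty sets interpreted as 0). Then the dimensions of W and W* are equal: dim W = dim W*. -/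
/-!
Each inf-sup condition says that the duality pairing, restricted to `Wstar × W`, has trivial kernel
on one side: for an element annihilated by the other space the supremum is zero, hence so is its
norm. The pairing thus embeds each space into the algebraic dual of the other, and as soon as one
of them is finite-dimensional, comparing dimensions both ways gives equality.
-/

theorem eq_zero_of_mul_norm_le_sSup {E : Type*} [NormedAddCommGroup E] {x : E} {β : ℝ} {s : Set ℝ}
    (hβ : 0 < β) (hx : β * ‖x‖ ≤ sSup s) (hs : ∀ r ∈ s, r ≤ 0) : x = 0 :=
  norm_le_zero_iff.mp <| nonpos_of_mul_nonpos_right (hx.trans (Real.sSup_nonpos hs)) hβ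

theorem toENat_rank_eq_of_nondegenerate {K X Y : Type*} [Field K] [AddCommGroup X] [Module K X]
    [AddCommGroup Y] [Module K Y] {B : X →ₗ[K] Y →ₗ[K] K} (hB : B.Nondegenerate) :
    (Module.rank K X).toENat = (Module.rank K Y).toENat := by
  have hleft : Function.Injective B :=
    LinearMap.ker_eq_bot.mp (LinearMap.separatingLeft_iff_ker_eq_bot.mp hB.1)
  have hright : Function.Injective B.flip :=
    LinearMap.ker_eq_bot.mp (LinearMap.separatingRight_iff_flip_ker_eq_bot.mp hB.2)
  by_cases hX : FiniteDimensional K X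
  · have hY : FiniteDimensional K Y := .of_injective B.flip hright
    have : B.IsPerfPair := .of_injective hleft hright
    rw [← Module.finrank_eq_rank, ← Module.finrank_eq_rank, Module.finrank_of_isPerfPair B,
      map_natCast, map_natCast]
  · have hY : ¬ FiniteDimensional K Y := fun _ ↦ hX (.of_injective B hleft)
    rw [Cardinal.toENat_eq_top.mpr (not_lt.mp (Module.rank_lt_aleph0_iff.not.mpr hX)),
      Cardinal.toENat_eq_top.mpr (not_lt.mp (Module.rank_lt_aleph0_iff.not.mpr hY))]

section InfSup

variable {𝕜 V : Type*} [RCLike 𝕜] [NormedAddCommGroup V] [NormedSpace 𝕜 V]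
  {W : Submodule 𝕜 V} {Wstar : Submodule 𝕜 (V →L[𝕜] 𝕜)} {β : ℝ}

theorem separatingLeft_topDualPairing_of_infsup (hβ : 0 < β)
    (hinfsup : ∀ η ∈ Wstar, β * ‖η‖ ≤
      sSup ((fun w : V ↦ RCLike.re (η w)) '' {w : V | w ∈ W ∧ ‖w‖ ≤ 1})) :
    ((topDualPairing 𝕜 V).domRestrict₁₂ Wstar W).SeparatingLeft := by
  intro η hη
  refine Subtype.ext (eq_zero_of_mul_norm_le_sSup hβ (hinfsup η η.2) ?_)
  rintro _ ⟨w, ⟨hw, -⟩, rfl⟩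
  have hηw : (η : V →L[𝕜] 𝕜) w = 0 := hη ⟨w, hw⟩
  simp only [hηw, map_zero, le_refl]

theorem separatingRight_topDualPairing_of_infsup (hβ : 0 < β)
    (hinfsup : ∀ w ∈ W, β * ‖w‖ ≤
      sSup ((fun η : V →L[𝕜] 𝕜 ↦ RCLike.re (η w)) '' {η : V →L[𝕜] 𝕜 | η ∈ Wstar ∧ ‖η‖ ≤ 1})) :
    ((topDualPairing 𝕜 V).domRestrict₁₂ Wstar W).SeparatingRight := by
  intro w hw
  refine Subtype.ext (eq_zero_of_mul_norm_le_sSup hβ (hinfsup w w.2) ?_)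
  rintro _ ⟨η, ⟨hη, -⟩, rfl⟩
  have hηw : η (w : V) = 0 := hw ⟨η, hη⟩
  simp only [hηw, map_zero, le_refl]

end InfSup

/-- Dimensions are compared in `ℕ∞`, because `Module.finrank` is `0` on every infinite-dimensional
space; infinite cardinals need not agree, as a dense subspace of `V` can be paired with all of its
dual. The real part replaces the modulus because both unit balls are invariant under unit
scalars. -/
theorem infsup_implies_equal_dim_general
    {𝕜 V : Type*} [RCLike 𝕜] [NormedAddCommGroup V] [NormedSpace 𝕜 V]
    (W : Submodule 𝕜 V) (Wstar : Submodule 𝕜 (V →L[𝕜] 𝕜)) (β : ℝ) (hβ : 0 < β)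
    (hinfsup₁ : ∀ w ∈ W, β * ‖w‖ ≤
      sSup ((fun η : V →L[𝕜] 𝕜 ↦ RCLike.re (η w)) '' {η : V →L[𝕜] 𝕜 | η ∈ Wstar ∧ ‖η‖ ≤ 1}))
    (hinfsup₂ : ∀ η ∈ Wstar, β * ‖η‖ ≤
      sSup ((fun w : V ↦ RCLike.re (η w)) '' {w : V | w ∈ W ∧ ‖w‖ ≤ 1})) :
    (Module.rank 𝕜 W).toENat = (Module.rank 𝕜 Wstar).toENat := by
  have hpairing : ((topDualPairing 𝕜 V).domRestrict₁₂ Wstar W).Nondegenerate :=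
    ⟨separatingLeft_topDualPairing_of_infsup hβ hinfsup₂,
      separatingRight_topDualPairing_of_infsup hβ hinfsup₁⟩
  exact (toENat_rank_eq_of_nondegenerate (X := Wstar) (Y := W) hpairing).symm

/-- If the two inf-sup conditions hold between
finite-dimensional subspaces `W ⊆ V` and `W* ⊆ V'`, then
`dim W = dim W*`. -/
theorem infsup_implies_equal_dim
    {V : Type*} [NormedAddCommGroup V] [NormedSpace ℝ V]
    (W : Submodule ℝ V) (Wstar : Submodule ℝ (V →L[ℝ] ℝ))
    [FiniteDimensional ℝ W] [FiniteDimensional ℝ Wstar]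
    (β : ℝ) (hβ : 0 < β)
    (hinfsup₁ : ∀ w ∈ W, β * ‖w‖ ≤
      sSup ((fun η : V →L[ℝ] ℝ => η w) '' {η : V →L[ℝ] ℝ | η ∈ Wstar ∧ ‖η‖ ≤ 1}))
    (hinfsup₂ : ∀ η ∈ Wstar, β * ‖η‖ ≤
      sSup ((fun w : V => η w) '' {w : V | w ∈ W ∧ ‖w‖ ≤ 1})) :
    Module.finrank ℝ W = Module.finrank ℝ Wstar :=
  congrArg ENat.toNat (infsup_implies_equal_dim_general W Wstar β hβ hinfsup₁ hinfsup₂)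
end

section
/- Suppose dim W = dim W* and there exists β > 0 such that β · ‖w‖ ≤ sup { η(w) : η ∈ W*, ‖η‖_{V'} ≤ 1 } for every w ∈ W. Then there exists β' > 0 such that β' · ‖η‖_{V'} ≤ sup { η(w) : w ∈ W, ‖w‖ ≤ 1 } for every η ∈ W*; that is, if the two subspaces have the same dimension, either one of the two inf-sup conditions implies the other. -/
/-!
The duality pairing restricted to `W × W*` is a bounded bilinear form `B`, and the two suprema are
the operator norms of `B w` and of `B.flip η`. A positive inf-sup constant `β` makes `w ↦ B w`
injective, hence onto the dual of `W*` as the dimensions agree. So for `η ∈ W*` a norming functional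
of `η` (Hahn–Banach) is `B w` for some `w ∈ W`, and `β * ‖w‖ ≤ ‖B w‖ ≤ 1` gives
`β * ‖η‖ = β * |B w η| ≤ ‖B.flip η‖ * (β * ‖w‖) ≤ ‖B.flip η‖`. The constant does not change.
-/

open Metric Module

section RealFunctional

variable {E : Type*} [SeminormedAddCommGroup E] [NormedSpace ℝ E] (f : StrongDual ℝ E)

theorem isLUB_image_unitClosedBall_norm : IsLUB (f '' closedBall 0 1) ‖f‖ := by
  constructor
  · rintro _ ⟨x, hx, rfl⟩
    exact (le_abs_self (f x)).trans (f.unit_le_opNorm x (mem_closedBall_zero_iff.mp hx))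
  · intro b hb
    have apply_le (x : E) (hx : ‖x‖ ≤ 1) : f x ≤ b :=
      hb ⟨x, mem_closedBall_zero_iff.mpr hx, rfl⟩
    have b_nonneg : 0 ≤ b := by simpa using apply_le 0 (by simp)
    refine f.opNorm_le_of_unit_norm b_nonneg fun x hx ↦ abs_le'.mpr ⟨apply_le x hx.le, ?_⟩
    simpa using apply_le (-x) (by simp [hx])

theorem sSup_image_submodule_unitClosedBall_eq_norm (L : Submodule ℝ E) :
    sSup ((fun x ↦ f x) '' {x | x ∈ L ∧ ‖x‖ ≤ 1}) = ‖f.domRestrict L‖ := by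
  have image_eq :
      (fun x ↦ f x) '' {x | x ∈ L ∧ ‖x‖ ≤ 1} = f.domRestrict L '' closedBall 0 1 := by
    ext; simp [and_assoc, and_left_comm]
  rw [image_eq]
  exact (isLUB_image_unitClosedBall_norm _).csSup_eq ((nonempty_closedBall.mpr zero_le_one).image _)

end RealFunctional

theorem surjective_strongDual_of_injective_of_finrank_eq {𝕜 E F : Type*}
    [NontriviallyNormedField 𝕜] [CompleteSpace 𝕜] [AddCommGroup E] [Module 𝕜 E]
    [NormedAddCommGroup F] [NormedSpace 𝕜 F] [FiniteDimensional 𝕜 F]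
    (hdim : finrank 𝕜 E = finrank 𝕜 F) {T : E →ₗ[𝕜] StrongDual 𝕜 F}
    (hT : Function.Injective T) : Function.Surjective T := by
  have : FiniteDimensional 𝕜 E := .of_injective T hT
  have finrank_dual : finrank 𝕜 (StrongDual 𝕜 F) = finrank 𝕜 F :=
    LinearMap.toContinuousLinearMap.finrank_eq.symm.trans Subspace.dual_finrank_eq
  exact (LinearMap.injective_iff_surjective_of_finrank_eq_finrank
    (hdim.trans finrank_dual.symm)).mp hT

theorem mul_norm_le_norm_flip_of_surjective {𝕜 E F : Type*} [RCLike 𝕜]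
    [SeminormedAddCommGroup E] [NormedSpace 𝕜 E] [SeminormedAddCommGroup F] [NormedSpace 𝕜 F]
    {β : ℝ} (hβ : 0 ≤ β) {B : E →L[𝕜] StrongDual 𝕜 F} (hsurj : Function.Surjective B)
    (hB : ∀ x, β * ‖x‖ ≤ ‖B x‖) (y : F) :
    β * ‖y‖ ≤ ‖B.flip y‖ := by
  obtain ⟨φ, hφ, hφy⟩ := exists_dual_vector'' 𝕜 y
  obtain ⟨x, rfl⟩ := hsurj φ
  have norm_y_le : ‖y‖ ≤ ‖B.flip y‖ * ‖x‖ := by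
    simpa [hφy] using (B.flip y).le_opNorm x
  calc β * ‖y‖ ≤ β * (‖B.flip y‖ * ‖x‖) := by gcongr
    _ = ‖B.flip y‖ * (β * ‖x‖) := by ring
    _ ≤ ‖B.flip y‖ * 1 := by gcongr; exact (hB x).trans hφ
    _ = ‖B.flip y‖ := mul_one _

section Pairing

variable {𝕜 E F : Type*} [RCLike 𝕜] [NormedAddCommGroup E] [NormedSpace 𝕜 E]
  [NormedAddCommGroup F] [NormedSpace 𝕜 F] {β : ℝ}

theorem mul_norm_le_norm_flip_of_finrank_eq [FiniteDimensional 𝕜 F]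
    (hdim : finrank 𝕜 E = finrank 𝕜 F) (hβ : 0 < β) {B : E →L[𝕜] StrongDual 𝕜 F}
    (hB : ∀ x, β * ‖x‖ ≤ ‖B x‖) (y : F) : β * ‖y‖ ≤ ‖B.flip y‖ := by
  have injective_B : Function.Injective B := by
    refine (injective_iff_map_eq_zero B).mpr fun x hx ↦ ?_
    have hx' : β * ‖x‖ ≤ 0 := by simpa [hx] using hB x
    exact norm_le_zero_iff.mp (nonpos_of_mul_nonpos_right hx' hβ)
  exact mul_norm_le_norm_flip_of_surjective hβ.le
    (surjective_strongDual_of_injective_of_finrank_eq (T := B.toLinearMap) hdim injective_B) hB y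

theorem forall_mul_norm_le_norm_iff_flip [FiniteDimensional 𝕜 E] [FiniteDimensional 𝕜 F]
    (hdim : finrank 𝕜 E = finrank 𝕜 F) (hβ : 0 < β) (B : E →L[𝕜] StrongDual 𝕜 F) :
    (∀ x, β * ‖x‖ ≤ ‖B x‖) ↔ ∀ y, β * ‖y‖ ≤ ‖B.flip y‖ :=
  ⟨mul_norm_le_norm_flip_of_finrank_eq hdim hβ,
    mul_norm_le_norm_flip_of_finrank_eq (B := B.flip) hdim.symm hβ⟩

end Pairing

theorem forall_mul_norm_le_sSup_iff_flip {E F : Type*}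
    [NormedAddCommGroup E] [NormedSpace ℝ E] [NormedAddCommGroup F] [NormedSpace ℝ F]
    (B : E →L[ℝ] StrongDual ℝ F) (L : Submodule ℝ E) (M : Submodule ℝ F)
    [FiniteDimensional ℝ L] [FiniteDimensional ℝ M] (hdim : finrank ℝ L = finrank ℝ M)
    {β : ℝ} (hβ : 0 < β) :
    (∀ x ∈ L, β * ‖x‖ ≤ sSup ((fun y ↦ B x y) '' {y | y ∈ M ∧ ‖y‖ ≤ 1})) ↔
      ∀ y ∈ M, β * ‖y‖ ≤ sSup ((fun x ↦ B x y) '' {x | x ∈ L ∧ ‖x‖ ≤ 1}) := by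
  let C : L →L[ℝ] StrongDual ℝ M := (B.flip.domRestrict M).flip.domRestrict L
  have sSup_eq_norm_apply (x : L) :
      sSup ((fun y ↦ B x y) '' {y | y ∈ M ∧ ‖y‖ ≤ 1}) = ‖C x‖ :=
    sSup_image_submodule_unitClosedBall_eq_norm (B x) M
  have sSup_eq_norm_flip_apply (y : M) :
      sSup ((fun x ↦ B x y) '' {x | x ∈ L ∧ ‖x‖ ≤ 1}) = ‖C.flip y‖ :=
    sSup_image_submodule_unitClosedBall_eq_norm (B.flip y) L
  have norm_iff := forall_mul_norm_le_norm_iff_flip hdim hβ C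
  simp only [← sSup_eq_norm_apply, ← sSup_eq_norm_flip_apply] at norm_iff
  simpa only [Subtype.forall, Submodule.coe_norm] using norm_iff

theorem infsup_transfer_of_equal_dim_general
    {V : Type*} [NormedAddCommGroup V] [NormedSpace ℝ V]
    (W : Submodule ℝ V) (Wstar : Submodule ℝ (V →L[ℝ] ℝ))
    [FiniteDimensional ℝ W] [FiniteDimensional ℝ Wstar]
    (hdim : finrank ℝ W = finrank ℝ Wstar) {β : ℝ} (hβ : 0 < β) :
    (∀ w ∈ W, β * ‖w‖ ≤
      sSup ((fun η : V →L[ℝ] ℝ => η w) '' {η : V →L[ℝ] ℝ | η ∈ Wstar ∧ ‖η‖ ≤ 1})) ↔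
    ∀ η ∈ Wstar, β * ‖η‖ ≤
      sSup ((fun w : V => η w) '' {w : V | w ∈ W ∧ ‖w‖ ≤ 1}) :=
  forall_mul_norm_le_sSup_iff_flip (NormedSpace.inclusionInDoubleDual ℝ V) W Wstar hdim hβ

/-- If `dim W = dim W*` and one inf-sup condition holds, then
the other inf-sup condition holds as well (with some positive constant). -/
theorem infsup_transfer_of_equal_dim
    {V : Type*} [NormedAddCommGroup V] [NormedSpace ℝ V]
    (W : Submodule ℝ V) (Wstar : Submodule ℝ (V →L[ℝ] ℝ))
    [FiniteDimensional ℝ W] [FiniteDimensional ℝ Wstar]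
    (hdim : Module.finrank ℝ W = Module.finrank ℝ Wstar)
    (β : ℝ) (hβ : 0 < β)
    (hinfsup₁ : ∀ w ∈ W, β * ‖w‖ ≤
      sSup ((fun η : V →L[ℝ] ℝ => η w) '' {η : V →L[ℝ] ℝ | η ∈ Wstar ∧ ‖η‖ ≤ 1})) :
    ∃ β' : ℝ, 0 < β' ∧ ∀ η ∈ Wstar, β' * ‖η‖ ≤
      sSup ((fun w : V => η w) '' {w : V | w ∈ W ∧ ‖w‖ ≤ 1}) :=
  ⟨β, hβ, (infsup_transfer_of_equal_dim_general W Wstar hdim hβ).mp hinfsup₁⟩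
end

section
/- Suppose β > 0 is such that the two inf-sup conditions hold: β · ‖w‖ ≤ sup { η(w) : η ∈ W*, ‖η‖_{V'} ≤ 1 } for every w ∈ W, and β · ‖η‖_{V'} ≤ sup { η(w) : w ∈ W, ‖w‖ ≤ 1 } for every η ∈ W*. Then for every basis (e_1, …, e_N) of W there exists a family (η_1, …, η_N) of elements of W* satisfying the biorthogonality property η_n(e_m) = 1 if n = m and 0 otherwise; moreover (η_1, …, η_N) is a basis of W*. -/
/-!
An inf-sup bound forces an element annihilated by the whole other space to have norm at most `0`, so
the two bounds make the pairing between `W*` and `W` nondegenerate. In finite dimensions a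
nondegenerate pairing is perfect: it identifies `W*` with the algebraic dual of `W`, and the
biorthogonal family is the preimage of the dual basis under this identification.
-/

open Module

theorem eq_zero_of_mul_norm_le_sSup_image {E α : Type*} [NormedAddCommGroup E] {β : ℝ}
    (hβ : 0 < β) {x : E} {f : α → ℝ} {s : Set α} (h : β * ‖x‖ ≤ sSup (f '' s))
    (hf : ∀ a ∈ s, f a ≤ 0) : x = 0 := by
  have hsup : sSup (f '' s) ≤ 0 := Real.sSup_nonpos (Set.forall_mem_image.mpr hf)
  exact norm_le_zero_iff.mp (nonpos_of_mul_nonpos_right (h.trans hsup) hβ)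

theorem nondegenerate_domRestrict₁₂_of_infsup {𝕜 E F : Type*} [RCLike 𝕜]
    [NormedAddCommGroup E] [NormedSpace 𝕜 E] [NormedAddCommGroup F] [NormedSpace 𝕜 F]
    (B : F →ₗ[𝕜] E →ₗ[𝕜] 𝕜) (W : Submodule 𝕜 E) (Wstar : Submodule 𝕜 F) {β : ℝ} (hβ : 0 < β)
    (hinfsup₁ : ∀ w ∈ W, β * ‖w‖ ≤
      sSup ((fun η : F => RCLike.re (B η w)) '' {η : F | η ∈ Wstar ∧ ‖η‖ ≤ 1}))
    (hinfsup₂ : ∀ η ∈ Wstar, β * ‖η‖ ≤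
      sSup ((fun w : E => RCLike.re (B η w)) '' {w : E | w ∈ W ∧ ‖w‖ ≤ 1})) :
    (B.domRestrict₁₂ Wstar W).Nondegenerate := by
  constructor
  · rintro ⟨η, hη⟩ hη_ann
    have hη_zero : η = 0 := eq_zero_of_mul_norm_le_sSup_image hβ (hinfsup₂ η hη)
      fun w hw ↦ (congrArg RCLike.re (hη_ann ⟨w, hw.1⟩)).trans_le RCLike.zero_re.le
    exact Subtype.ext hη_zero
  · rintro ⟨w, hw⟩ hw_ann
    have hw_zero : w = 0 := eq_zero_of_mul_norm_le_sSup_image hβ (hinfsup₁ w hw)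
      fun η hη ↦ (congrArg RCLike.re (hw_ann ⟨η, hη.1⟩)).trans_le RCLike.zero_re.le
    exact Subtype.ext hw_zero

theorem isPerfPair_of_nondegenerate {K M N : Type*} [Field K] [AddCommGroup M] [Module K M]
    [AddCommGroup N] [Module K N] [FiniteDimensional K N] {p : M →ₗ[K] N →ₗ[K] K}
    (hp : p.Nondegenerate) : p.IsPerfPair :=
  .of_injective' (LinearMap.ker_eq_bot.mp (LinearMap.separatingLeft_iff_ker_eq_bot.mp hp.1))
    (LinearMap.ker_eq_bot.mp (LinearMap.separatingRight_iff_flip_ker_eq_bot.mp hp.2))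

section BiorthogonalBasis

variable {R M N ι : Type*} [CommRing R] [AddCommGroup M] [Module R M] [AddCommGroup N] [Module R N]
  [Finite ι] [DecidableEq ι] (p : M →ₗ[R] N →ₗ[R] R) [p.IsPerfPair] (b : Basis ι R N)

/-- The basis of `M` biorthogonal to a finite basis `b` of `N` with respect to a perfect pairing
`p` of `M` and `N`: the basis corresponding to `b.dualBasis` under `M ≃ₗ[R] Dual R N`. -/
noncomputable def biorthogonalBasis : Basis ι R M :=
  b.dualBasis.map p.toPerfPair.symm

theorem apply_biorthogonalBasis_apply (i j : ι) :
    p (biorthogonalBasis p b i) (b j) = if i = j then 1 else 0 := by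
  simp only [biorthogonalBasis, Basis.map_apply, LinearMap.apply_symm_toPerfPair_self,
    Basis.dualBasis_apply_self, eq_comm]

end BiorthogonalBasis

theorem exists_biorthogonal_of_nondegenerate {K E F ι : Type*} [Field K] [AddCommGroup E]
    [Module K E] [AddCommGroup F] [Module K F] [Finite ι] [DecidableEq ι]
    {B : F →ₗ[K] E →ₗ[K] K} {W : Submodule K E} {Wstar : Submodule K F}
    (hB : (B.domRestrict₁₂ Wstar W).Nondegenerate) {e : ι → E} (he : LinearIndependent K e)
    (hspan : Submodule.span K (Set.range e) = W) :
    ∃ η : ι → F, (∀ n, η n ∈ Wstar) ∧ (∀ n m, B (η n) (e m) = if n = m then 1 else 0) ∧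
      LinearIndependent K η ∧ Submodule.span K (Set.range η) = Wstar := by
  subst hspan
  let b := Basis.span he
  have : FiniteDimensional K (Submodule.span K (Set.range e)) := .of_basis b
  have := isPerfPair_of_nondegenerate hB
  let c : Basis ι K Wstar := biorthogonalBasis (B.domRestrict₁₂ Wstar _) b
  refine ⟨fun n ↦ c n, fun n ↦ (c n).2, fun n m ↦ ?_, ?_, ?_⟩
  · rw [← apply_biorthogonalBasis_apply (B.domRestrict₁₂ Wstar _) b n m,
      LinearMap.domRestrict₁₂_apply, Basis.coe_span_apply he m]
  · exact c.linearIndependent.map' Wstar.subtype Wstar.ker_subtype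
  · exact (Submodule.span_range_subtype_eq_top_iff Wstar fun n ↦ (c n).2).mp c.span_eq

theorem infsup_biorthogonal_basis_general {𝕜 E F ι : Type*} [RCLike 𝕜]
    [NormedAddCommGroup E] [NormedSpace 𝕜 E] [NormedAddCommGroup F] [NormedSpace 𝕜 F]
    [Finite ι] [DecidableEq ι] (B : F →ₗ[𝕜] E →ₗ[𝕜] 𝕜)
    (W : Submodule 𝕜 E) (Wstar : Submodule 𝕜 F) {β : ℝ} (hβ : 0 < β)
    (hinfsup₁ : ∀ w ∈ W, β * ‖w‖ ≤
      sSup ((fun η : F => RCLike.re (B η w)) '' {η : F | η ∈ Wstar ∧ ‖η‖ ≤ 1}))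
    (hinfsup₂ : ∀ η ∈ Wstar, β * ‖η‖ ≤
      sSup ((fun w : E => RCLike.re (B η w)) '' {w : E | w ∈ W ∧ ‖w‖ ≤ 1}))
    {e : ι → E} (he : LinearIndependent 𝕜 e) (hspan : Submodule.span 𝕜 (Set.range e) = W) :
    ∃ η : ι → F, (∀ n, η n ∈ Wstar) ∧ (∀ n m, B (η n) (e m) = if n = m then 1 else 0) ∧
      LinearIndependent 𝕜 η ∧ Submodule.span 𝕜 (Set.range η) = Wstar :=
  exists_biorthogonal_of_nondegenerate
    (nondegenerate_domRestrict₁₂_of_infsup B W Wstar hβ hinfsup₁ hinfsup₂) he hspan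

/-- Under the two inf-sup conditions, every basis of `W`
admits a biorthogonal family in `W*`, which is moreover a basis of `W*`. -/
theorem infsup_biorthogonal_basis
    {V : Type*} [NormedAddCommGroup V] [NormedSpace ℝ V]
    (W : Submodule ℝ V) (Wstar : Submodule ℝ (V →L[ℝ] ℝ))
    [FiniteDimensional ℝ W] [FiniteDimensional ℝ Wstar]
    (β : ℝ) (hβ : 0 < β)
    (hinfsup₁ : ∀ w ∈ W, β * ‖w‖ ≤
      sSup ((fun η : V →L[ℝ] ℝ => η w) '' {η : V →L[ℝ] ℝ | η ∈ Wstar ∧ ‖η‖ ≤ 1}))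
    (hinfsup₂ : ∀ η ∈ Wstar, β * ‖η‖ ≤
      sSup ((fun w : V => η w) '' {w : V | w ∈ W ∧ ‖w‖ ≤ 1})) :
    ∀ (N : ℕ) (e : Fin N → V), LinearIndependent ℝ e → (∀ n, e n ∈ W) →
      Submodule.span ℝ (Set.range e) = W →
      ∃ η : Fin N → (V →L[ℝ] ℝ), (∀ n, η n ∈ Wstar) ∧
        (∀ n m, η n (e m) = if n = m then 1 else 0) ∧
        LinearIndependent ℝ η ∧ Submodule.span ℝ (Set.range η) = Wstar :=
  fun _ _ he _ hspan ↦
    infsup_biorthogonal_basis_general (topDualPairing ℝ V) W Wstar hβ hinfsup₁ hinfsup₂ he hspan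
end

section
/- For every a ∈ (0,1), the 2×2 real matrix M defined below is symmetric, and its eigenvalues are exactly 1 + g(a) and 1 − g(a), where g(a) := √(a+1) · (3a² − 3a + 1) / (2 · √(2−a) · (a − a³)); equivalently, the characteristic polynomial of M is (X − (1 + g(a))) · (X − (1 − g(a))). -/
open Matrix Polynomial

/-! Scaling by `D^{-1/2}` with `D` the diagonal part of `G` makes every diagonal entry of the scaled
symmetrization equal to `1`, whatever the lengths and the exponent. A symmetric `2 × 2` matrix with
unit diagonal and off-diagonal entry `m` has eigenvalues `1 ± m`. For exponent `1/2` and lengths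
`ℓ₀, ℓ₁`, `m = (ℓ₀ G₀₁ + ℓ₁ G₁₀) / (2 √(ℓ₀ ℓ₁ G₀₀ G₁₁))`; for the local Gramian the numerator is
`a³ + (1 - a)³ = 3a² - 3a + 1` and the radicand is `(a(1 - a))² (2 - a)(a + 1)`. -/

theorem charpoly_circulant_fin_two {R : Type*} [CommRing R] (p q : R) :
    !![p, q; q, p].charpoly = (X - C (p + q)) * (X - C (p - q)) := by
  simp only [charpoly, det_fin_two, charmatrix_apply_eq, of_apply, cons_val', cons_val_zero,
    cons_val_fin_one, cons_val_one, ne_eq, zero_ne_one, not_false_eq_true, charmatrix_apply_ne,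
    one_ne_zero, map_add, map_sub]
  ring

theorem rpow_neg_one_div_two_eq_inv_sqrt {x : ℝ} (hx : 0 ≤ x) :
    x ^ (-1 / 2 : ℝ) = (√x)⁻¹ := by
  rw [neg_div, Real.rpow_neg hx, Real.sqrt_eq_rpow]

section ScaledGramian

variable {n : Type*} [Fintype n] [DecidableEq n]

/-- The symmetrized, scaled Gramian `(1/2) D^{-1/2} (H G H⁻¹ + H⁻¹ Gᵀ H) D^{-1/2}` of a Gramian `G`
for interval lengths `ℓ` and Sobolev exponent `s`, where `D` is the diagonal part of `G` and
`H = diag(ℓ ^ s)`. The inverse powers are entrywise real powers, which are the intended matrices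
only for positive lengths and a positive diagonal of `G`. -/
noncomputable def scaledGramian (s : ℝ) (ℓ : n → ℝ) (G : Matrix n n ℝ) : Matrix n n ℝ :=
  (1 / 2 : ℝ) •
    (diagonal (fun i => G i i ^ (-1 / 2 : ℝ)) *
      (diagonal (fun i => ℓ i ^ s) * G * diagonal (fun i => ℓ i ^ (-s)) +
        diagonal (fun i => ℓ i ^ (-s)) * Gᵀ * diagonal (fun i => ℓ i ^ s)) *
      diagonal (fun i => G i i ^ (-1 / 2 : ℝ)))

namespace scaledGramian

theorem isSymm (s : ℝ) (ℓ : n → ℝ) (G : Matrix n n ℝ) : (scaledGramian s ℓ G).IsSymm := by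
  simp only [IsSymm, scaledGramian, transpose_smul, transpose_mul, transpose_add,
    diagonal_transpose, transpose_transpose, Matrix.mul_assoc]
  rw [add_comm]

theorem apply_eq_rpow_div_sqrt (s : ℝ) {ℓ : n → ℝ} {G : Matrix n n ℝ} {i j : n}
    (hℓi : 0 ≤ ℓ i) (hℓj : 0 ≤ ℓ j) (hGi : 0 ≤ G i i) (hGj : 0 ≤ G j j) :
    scaledGramian s ℓ G i j =
      ((ℓ i / ℓ j) ^ s * G i j + (ℓ j / ℓ i) ^ s * G j i) / (2 * √(G i i * G j j)) := by
  simp only [scaledGramian, Matrix.smul_apply, smul_eq_mul, Matrix.mul_diagonal,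
    Matrix.diagonal_mul, Matrix.add_apply, transpose_apply]
  rw [rpow_neg_one_div_two_eq_inv_sqrt hGi, rpow_neg_one_div_two_eq_inv_sqrt hGj,
    Real.div_rpow hℓi hℓj, Real.div_rpow hℓj hℓi, Real.rpow_neg hℓi, Real.rpow_neg hℓj,
    Real.sqrt_mul hGi]
  ring

theorem apply_self (s : ℝ) {ℓ : n → ℝ} {G : Matrix n n ℝ} {i : n}
    (hℓ : 0 < ℓ i) (hG : 0 < G i i) : scaledGramian s ℓ G i i = 1 := by
  rw [apply_eq_rpow_div_sqrt s hℓ.le hℓ.le hG.le hG.le, div_self hℓ.ne', Real.one_rpow,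
    Real.sqrt_mul_self hG.le, one_mul, ← two_mul, div_self (by positivity)]

theorem half_apply_eq_div_sqrt {ℓ : n → ℝ} {G : Matrix n n ℝ} {i j : n}
    (hℓi : 0 < ℓ i) (hℓj : 0 < ℓ j) (hGi : 0 ≤ G i i) (hGj : 0 ≤ G j j) :
    scaledGramian (1 / 2) ℓ G i j =
      (ℓ i * G i j + ℓ j * G j i) / (2 * √(ℓ i * ℓ j * (G i i * G j j))) := by
  rw [apply_eq_rpow_div_sqrt _ hℓi.le hℓj.le hGi hGj, ← Real.sqrt_eq_rpow, ← Real.sqrt_eq_rpow,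
    Real.sqrt_div hℓi.le, Real.sqrt_div hℓj.le, Real.sqrt_mul (mul_pos hℓi hℓj).le,
    Real.sqrt_mul hℓi.le]
  have clear_ratios : √(ℓ i) / √(ℓ j) * G i j + √(ℓ j) / √(ℓ i) * G j i =
      (ℓ i * G i j + ℓ j * G j i) / (√(ℓ i) * √(ℓ j)) := by
    field_simp
    rw [Real.sq_sqrt hℓi.le, Real.sq_sqrt hℓj.le]
    ring
  rw [clear_ratios, div_div]
  ring

theorem charpoly_fin_two (s : ℝ) {ℓ : Fin 2 → ℝ} {G : Matrix (Fin 2) (Fin 2) ℝ}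
    (hℓ : ∀ i, 0 < ℓ i) (hG : ∀ i, 0 < G i i) :
    (scaledGramian s ℓ G).charpoly =
      (X - C (1 + scaledGramian s ℓ G 0 1)) * (X - C (1 - scaledGramian s ℓ G 0 1)) := by
  rw [← charpoly_circulant_fin_two]
  congr 1
  rw [eta_fin_two (scaledGramian s ℓ G), apply_self s (hℓ 0) (hG 0), apply_self s (hℓ 1) (hG 1),
    (isSymm s ℓ G).apply 0 1]
  rfl

end scaledGramian

end ScaledGramian

section LocalGramian

/-- The lengths `2a` and `2(1 - a)` of two adjacent mesh intervals, normalized so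
that the dual interval joining their midpoints has length `1`. -/
def localLengths (a : ℝ) : Fin 2 → ℝ :=
  ![2 * a, 2 * (1 - a)]

/-- The local Gramian of the Steinbach projector for the intervals of lengths `localLengths a`. -/
noncomputable def localGramian (a : ℝ) : Matrix (Fin 2) (Fin 2) ℝ :=
  (1 / 2 : ℝ) • !![(2 - a) * a, a ^ 2; (1 - a) ^ 2, 1 - a ^ 2]

variable {a : ℝ}

theorem localLengths_pos (ha0 : 0 < a) (ha1 : a < 1) (i : Fin 2) : 0 < localLengths a i := by
  fin_cases i <;> simp [localLengths, ha0, ha1]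

theorem localGramian_apply_self_pos (ha0 : 0 < a) (ha1 : a < 1) (i : Fin 2) :
    0 < localGramian a i i := by
  fin_cases i
  · simpa [localGramian, ha0] using ha1.trans one_lt_two
  · simpa [localGramian, abs_of_pos ha0] using ha1

theorem scaledGramian_half_localGramian_zero_one (ha0 : 0 < a) (ha1 : a < 1) :
    scaledGramian (1 / 2) (localLengths a) (localGramian a) 0 1 =
      √(a + 1) * (3 * a ^ 2 - 3 * a + 1) / (2 * √(2 - a) * (a - a ^ 3)) := by
  have h1a : 0 < 1 - a := sub_pos.2 ha1
  have h2a : 0 < 2 - a := by linarith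
  have ha : 0 < a + 1 := by linarith
  have numerator : localLengths a 0 * localGramian a 0 1 + localLengths a 1 * localGramian a 1 0 =
      3 * a ^ 2 - 3 * a + 1 := by
    simp only [localLengths, localGramian, Matrix.smul_apply, smul_eq_mul, of_apply, cons_val',
      cons_val_zero, cons_val_one, cons_val_fin_one]
    ring
  have radicand : localLengths a 0 * localLengths a 1 * (localGramian a 0 0 * localGramian a 1 1) =
      (a * (1 - a)) ^ 2 * ((2 - a) * (a + 1)) := by
    simp only [localLengths, localGramian, Matrix.smul_apply, smul_eq_mul, of_apply, cons_val',
      cons_val_zero, cons_val_one, cons_val_fin_one]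
    ring
  have sqrt_radicand : √((a * (1 - a)) ^ 2 * ((2 - a) * (a + 1))) =
      a * (1 - a) * (√(2 - a) * √(a + 1)) := by
    rw [Real.sqrt_mul (sq_nonneg _), Real.sqrt_sq (by positivity), Real.sqrt_mul h2a.le]
  have factor : a - a ^ 3 = a * (1 - a) * √(a + 1) ^ 2 := by
    rw [Real.sq_sqrt ha.le]
    ring
  rw [scaledGramian.half_apply_eq_div_sqrt (localLengths_pos ha0 ha1 0) (localLengths_pos ha0 ha1 1)
    (localGramian_apply_self_pos ha0 ha1 0).le (localGramian_apply_self_pos ha0 ha1 1).le,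
    numerator, radicand, sqrt_radicand, factor]
  field_simp

end LocalGramian

/-- For every `a ∈ (0,1)`, the symmetrized scaled local
Gramian matrix `M = (1/2) D^{-1/2} (H G H⁻¹ + H⁻¹ Gᵀ H) D^{-1/2}` arising from
the Steinbach projector with `s = 1/2` is symmetric and its eigenvalues are
exactly `1 + g(a)` and `1 − g(a)`, where
`g(a) = √(a+1)·(3a² − 3a + 1) / (2·√(2−a)·(a − a³))`; equivalently, its
characteristic polynomial is `(X − (1 + g(a)))·(X − (1 − g(a)))`. -/
theorem steinbach_local_matrix_eigenvalues
    (a : ℝ) (ha0 : 0 < a) (ha1 : a < 1)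
    (G D Dinvhalf H Hinv M : Matrix (Fin 2) (Fin 2) ℝ)
    (hG : G = (1/2 : ℝ) • !![(2-a)*a, a^2; (1-a)^2, 1-a^2])
    (hD : D = !![(2-a)*a/2, 0; 0, (1-a^2)/2])
    (hDinvhalf : Dinvhalf = !![((2-a)*a/2)^((-1 : ℝ)/2), 0; 0, ((1-a^2)/2)^((-1 : ℝ)/2)])
    (hH : H = !![Real.sqrt (2*a), 0; 0, Real.sqrt (2*(1-a))])
    (hHinv : Hinv = !![(2*a)^((-1 : ℝ)/2), 0; 0, (2*(1-a))^((-1 : ℝ)/2)])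
    (hM : M = (1/2 : ℝ) • (Dinvhalf * (H * G * Hinv + Hinv * Gᵀ * H) * Dinvhalf))
    (g : ℝ)
    (hg : g = Real.sqrt (a+1) * (3*a^2 - 3*a + 1) /
      (2 * Real.sqrt (2-a) * (a - a^3))) :
    Mᵀ = M ∧ M.charpoly = (X - C (1 + g)) * (X - C (1 - g)) := by
  have hG_local : G = localGramian a := hG
  have hDinvhalf_diag : Dinvhalf = diagonal (fun i => localGramian a i i ^ (-1 / 2 : ℝ)) := by
    rw [hDinvhalf, diagonal_fin_two]
    simp [localGramian, div_eq_inv_mul]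
  have hH_diag : H = diagonal (fun i => localLengths a i ^ (1 / 2 : ℝ)) := by
    rw [hH, diagonal_fin_two]
    simp [localLengths, Real.sqrt_eq_rpow]
  have hHinv_diag : Hinv = diagonal (fun i => localLengths a i ^ (-(1 / 2) : ℝ)) := by
    rw [hHinv, diagonal_fin_two]
    simp [localLengths, neg_div]
  have hM_scaled : M = scaledGramian (1 / 2) (localLengths a) (localGramian a) := by
    rw [hM, hG_local, hDinvhalf_diag, hH_diag, hHinv_diag, scaledGramian]
  rw [hM_scaled, hg, ← scaledGramian_half_localGramian_zero_one ha0 ha1]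
  exact ⟨scaledGramian.isSymm _ _ _,
    scaledGramian.charpoly_fin_two _ (localLengths_pos ha0 ha1)
      (localGramian_apply_self_pos ha0 ha1)⟩
end

section
/- For every integer k ≥ 1 there exists a constant c > 0, depending only on k, with the following property: for every real polynomial η of degree at most k−1 with η ≠ 0, there exists a real polynomial q of degree at most k+1 with q(0) = 0, q(1) = 0, q ≠ 0, and ∫₀¹ η(x)·q(x) dx ≥ c · (∫₀¹ η(x)² dx)^{1/2} · (∫₀¹ q(x)² dx)^{1/2}. (Inf-sup stability between polynomials of degree ≤ k−1 and polynomials of degree ≤ k+1 vanishing at the endpoints of the reference interval, in the L²(0,1) norm.) -/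
/-!
The polynomial `q` is the bubble multiple `w * η` with `w = X * (1 - X)`, which gains two degrees
and vanishes at both endpoints. Then `∫ η q = ∫ w η²`, a positive definite quadratic form in `η`.
On a finite-dimensional space such a form dominates every other quadratic form up to a constant,
in particular both `∫ η²` and `∫ (w η)²`; the inf-sup inequality is the geometric mean of these two
bounds.
-/

open Polynomial

theorem exists_pos_forall_quadraticForm_le_mul_norm_sq {E : Type*} [NormedAddCommGroup E]
    [NormedSpace ℝ E] [FiniteDimensional ℝ E] (Q : QuadraticForm ℝ E) :
    ∃ C : ℝ, 0 < C ∧ ∀ x, Q x ≤ C * ‖x‖ ^ 2 := by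
  let B : E →L[ℝ] E →L[ℝ] ℝ :=
    LinearMap.toContinuousBilinearMap (QuadraticMap.associated (R := ℝ) Q)
  refine ⟨‖B‖ + 1, by positivity, fun x => ?_⟩
  calc Q x = B x x := (QuadraticMap.associated_eq_self_apply ℝ Q x).symm
    _ ≤ ‖B x x‖ := Real.le_norm_self _
    _ ≤ ‖B‖ * ‖x‖ * ‖x‖ := B.le_opNorm₂ x x
    _ = ‖B‖ * ‖x‖ ^ 2 := by ring
    _ ≤ (‖B‖ + 1) * ‖x‖ ^ 2 := by gcongr; exact le_add_of_nonneg_right zero_le_one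

/-- The inner product obtained by polarizing a positive definite real quadratic form, normalized so
that `⟪x, x⟫ = P x`. -/
@[reducible]
noncomputable def innerProductCoreOfPosDef {E : Type*} [AddCommGroup E] [Module ℝ E]
    {P : QuadraticForm ℝ E} (hP : P.PosDef) : InnerProductSpace.Core ℝ E where
  inner x y := QuadraticMap.associated (R := ℝ) P x y
  conj_inner_symm x y := QuadraticMap.associated_isSymm ℝ P y x
  re_inner_nonneg x := (hP.nonneg x).trans_eq (QuadraticMap.associated_eq_self_apply ℝ P x).symm
  add_left x y z := LinearMap.map_add₂ _ x y z
  smul_left x y r := LinearMap.map_smul₂ _ r x y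
  definite x hx :=
    hP.anisotropic x ((QuadraticMap.associated_eq_self_apply ℝ P x).symm.trans hx)

theorem exists_pos_forall_mul_le_of_posDef {E : Type*} [AddCommGroup E] [Module ℝ E]
    [FiniteDimensional ℝ E] {P : QuadraticForm ℝ E} (hP : P.PosDef) (Q : QuadraticForm ℝ E) :
    ∃ c : ℝ, 0 < c ∧ ∀ x, c * Q x ≤ P x := by
  let : NormedAddCommGroup E := (innerProductCoreOfPosDef hP).toNormedAddCommGroup
  let : InnerProductSpace ℝ E := InnerProductSpace.ofCore (innerProductCoreOfPosDef hP).toCore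
  have norm_sq_eq (x : E) : ‖x‖ ^ 2 = P x :=
    (real_inner_self_eq_norm_sq x).symm.trans (QuadraticMap.associated_eq_self_apply ℝ P x)
  obtain ⟨C, hC, hle⟩ := exists_pos_forall_quadraticForm_le_mul_norm_sq Q
  refine ⟨C⁻¹, inv_pos.mpr hC, fun x => ?_⟩
  rw [inv_mul_le_iff₀ hC, ← norm_sq_eq]
  exact hle x

theorem integral_eval_pos {a b : ℝ} (hab : a < b) {p : ℝ[X]} (hp : p ≠ 0)
    (hp_nonneg : ∀ x ∈ Set.Icc a b, 0 ≤ p.eval x) : 0 < ∫ x in a..b, p.eval x := by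
  obtain ⟨y, hy, hpy⟩ : ∃ y ∈ Set.Icc a b, ¬ p.IsRoot y := by
    by_contra! hroot
    exact hp (eq_zero_of_infinite_isRoot p ((Set.Icc_infinite hab).mono hroot))
  exact intervalIntegral.integral_pos hab p.continuousOn
    (fun x hx => hp_nonneg x (Set.Ioc_subset_Icc_self hx))
    ⟨y, hy, (hp_nonneg y hy).lt_of_ne' hpy⟩

/-- The integration functional `p ↦ ∫ x in a..b, p(x)` on polynomials. -/
noncomputable def evalIntegral (a b : ℝ) : ℝ[X] →ₗ[ℝ] ℝ where
  toFun p := ∫ x in a..b, p.eval x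
  map_add' p q := by
    simp only [eval_add]
    exact intervalIntegral.integral_add (p.continuous.intervalIntegrable a b)
      (q.continuous.intervalIntegrable a b)
  map_smul' r p := by
    simp only [eval_smul, RingHom.id_apply]
    exact intervalIntegral.integral_smul r _

/-- The quadratic form `p ↦ ∫ x in a..b, w(x) p(x)²`, the square of the weighted `L²(a,b)` norm
when `w` is nonnegative. The weight is a polynomial, so that the integrand is one too. -/
noncomputable def weightedSqIntegral (a b : ℝ) (w : ℝ[X]) : QuadraticForm ℝ ℝ[X] :=
  LinearMap.BilinMap.toQuadraticMap
    ((LinearMap.mul ℝ ℝ[X]).compr₂ (evalIntegral a b ∘ₗ LinearMap.mulLeft ℝ w))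

theorem weightedSqIntegral_apply (a b : ℝ) (w p : ℝ[X]) :
    weightedSqIntegral a b w p = ∫ x in a..b, (w * (p * p)).eval x :=
  rfl

theorem posDef_weightedSqIntegral {a b : ℝ} (hab : a < b) {w : ℝ[X]} (hw : w ≠ 0)
    (hw_nonneg : ∀ x ∈ Set.Icc a b, 0 ≤ w.eval x) : (weightedSqIntegral a b w).PosDef := by
  intro p hp
  rw [weightedSqIntegral_apply]
  refine integral_eval_pos hab (mul_ne_zero hw (mul_ne_zero hp hp)) fun x hx => ?_
  rw [eval_mul, eval_mul]
  exact mul_nonneg (hw_nonneg x hx) (mul_self_nonneg _)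

theorem exists_pos_forall_mul_weightedSqIntegral_le {a b : ℝ} (hab : a < b) {w : ℝ[X]}
    (hw : w ≠ 0) (hw_nonneg : ∀ x ∈ Set.Icc a b, 0 ≤ w.eval x) (v : ℝ[X])
    (V : Submodule ℝ ℝ[X]) [FiniteDimensional ℝ V] :
    ∃ c : ℝ, 0 < c ∧ ∀ p ∈ V, c * weightedSqIntegral a b v p ≤ weightedSqIntegral a b w p := by
  have hpos : ((weightedSqIntegral a b w).restrict V).PosDef := fun p hp =>
    posDef_weightedSqIntegral hab hw hw_nonneg p (mt Submodule.coe_eq_zero.mp hp)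
  obtain ⟨c, hc, hle⟩ :=
    exists_pos_forall_mul_le_of_posDef hpos ((weightedSqIntegral a b v).restrict V)
  exact ⟨c, hc, fun p hp => hle ⟨p, hp⟩⟩

theorem exists_pos_infsup_mul_weight {a b : ℝ} (hab : a < b) {w : ℝ[X]} (hw : w ≠ 0)
    (hw_nonneg : ∀ x ∈ Set.Icc a b, 0 ≤ w.eval x) (V : Submodule ℝ ℝ[X])
    [FiniteDimensional ℝ V] :
    ∃ c : ℝ, 0 < c ∧ ∀ p ∈ V,
      c * √(∫ x in a..b, p.eval x ^ 2) * √(∫ x in a..b, (w * p).eval x ^ 2) ≤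
        ∫ x in a..b, p.eval x * (w * p).eval x := by
  obtain ⟨c₁, hc₁, hle₁⟩ := exists_pos_forall_mul_weightedSqIntegral_le hab hw hw_nonneg 1 V
  obtain ⟨c₂, hc₂, hle₂⟩ :=
    exists_pos_forall_mul_weightedSqIntegral_le hab hw hw_nonneg (w ^ 2) V
  refine ⟨√c₁ * √c₂, by positivity, fun p hp => ?_⟩
  have sq_norm_p : ∫ x in a..b, p.eval x ^ 2 = weightedSqIntegral a b 1 p := by
    simp only [weightedSqIntegral_apply, one_mul, eval_mul, sq]
  have sq_norm_wp : ∫ x in a..b, (w * p).eval x ^ 2 = weightedSqIntegral a b (w ^ 2) p := by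
    simp only [weightedSqIntegral_apply, ← eval_pow, mul_pow, sq p]
  have pairing : ∫ x in a..b, p.eval x * (w * p).eval x = weightedSqIntegral a b w p := by
    simp only [weightedSqIntegral_apply, ← eval_mul, mul_left_comm]
  have w_nonneg := (posDef_weightedSqIntegral hab hw hw_nonneg).nonneg p
  rw [sq_norm_p, sq_norm_wp, pairing]
  calc √c₁ * √c₂ * √(weightedSqIntegral a b 1 p) * √(weightedSqIntegral a b (w ^ 2) p)
      = √(c₁ * weightedSqIntegral a b 1 p) * √(c₂ * weightedSqIntegral a b (w ^ 2) p) := by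
        rw [Real.sqrt_mul hc₁.le, Real.sqrt_mul hc₂.le]
        ring
    _ ≤ √(weightedSqIntegral a b w p) * √(weightedSqIntegral a b w p) := by
        gcongr
        exacts [hle₁ p hp, hle₂ p hp]
    _ = weightedSqIntegral a b w p := Real.mul_self_sqrt w_nonneg

/-- Inf-sup stability between polynomials of degree `≤ k−1`
and polynomials of degree `≤ k+1` vanishing at the endpoints of the reference
interval `[0,1]`, in the `L²(0,1)` norm: for every `k ≥ 1` there is a constant
`c > 0`, depending only on `k`, such that every nonzero polynomial `η` of
degree at most `k−1` admits a nonzero polynomial `q` of degree at most `k+1`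
with `q(0) = q(1) = 0` and
`∫₀¹ η q ≥ c · ‖η‖_{L²(0,1)} · ‖q‖_{L²(0,1)}`. -/
theorem polynomial_infsup_reference_interval :
    ∀ k : ℕ, 1 ≤ k → ∃ c : ℝ, 0 < c ∧
      ∀ η : Polynomial ℝ, η.natDegree ≤ k - 1 → η ≠ 0 →
        ∃ q : Polynomial ℝ, q.natDegree ≤ k + 1 ∧ q.eval 0 = 0 ∧ q.eval 1 = 0 ∧
          q ≠ 0 ∧
          c * Real.sqrt (∫ x in (0:ℝ)..1, (η.eval x)^2) *
              Real.sqrt (∫ x in (0:ℝ)..1, (q.eval x)^2) ≤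
            ∫ x in (0:ℝ)..1, η.eval x * q.eval x := by
  intro k hk
  have bubble_natDegree : (X * (1 - X) : ℝ[X]).natDegree ≤ 2 := by compute_degree
  have bubble_ne_zero : (X * (1 - X) : ℝ[X]) ≠ 0 :=
    mul_ne_zero X_ne_zero (sub_ne_zero.mpr (X_ne_C 1).symm)
  have bubble_nonneg (x : ℝ) (hx : x ∈ Set.Icc 0 1) : 0 ≤ (X * (1 - X) : ℝ[X]).eval x := by
    simpa using mul_nonneg hx.1 (sub_nonneg.mpr hx.2)
  have : FiniteDimensional ℝ (degreeLT ℝ k) := Module.Finite.equiv (degreeLTEquiv ℝ k).symm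
  obtain ⟨c, hc, infsup⟩ :=
    exists_pos_infsup_mul_weight zero_lt_one bubble_ne_zero bubble_nonneg (degreeLT ℝ k)
  refine ⟨c, hc, fun η hη hη_ne => ⟨X * (1 - X) * η, ?_, by simp, by simp,
    mul_ne_zero bubble_ne_zero hη_ne, infsup η ?_⟩⟩
  · have := natDegree_mul_le_of_le bubble_natDegree hη
    lia
  · rw [mem_degreeLT, ← natDegree_lt_iff_degree_lt hη_ne]
    lia
end
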